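/- arXiv:1804.07630 — 2 statements merged into one kernel-verified Lean document; each statement's English description precedes it below -/
import Mathlib

section
/- Let Σ be a finite set with a distinguished element 0, and let X ⊆ Σ^{ℤ²} be a subshift of finite type containing the all-0 configuration 0^{ℤ²} which is block-gluing: there exists R ∈ ℕ such that whenever A, B ⊆ ℤ² are (possibly infinite) rectangles (products of intervals) with ℓ∞-distance at least R between them, and P : A → Σ, Q : B → Σ are patterns each occurring in some point of X, there exists x ∈ X with x|_A = P and x|_B = Q. Then every continuous map f : X → X commuting with the ℤ²-shift action and satisfying fⁿ(x) → 0^{ℤ²} for every x ∈ X is nilpotent, i.e. fⁿ(X) = {0^{ℤ²}} for some n ∈ ℕ. -/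
set_option linter.unusedSectionVars false

namespace NilRig

/-- sup-norm closeness, in a linear-arithmetic friendly form -/
def near (r : ℤ) (u v : ℤ × ℤ) : Prop :=
  -r ≤ u.1 - v.1 ∧ u.1 - v.1 ≤ r ∧ -r ≤ u.2 - v.2 ∧ u.2 - v.2 ≤ r

theorem near_finite (r : ℤ) (v : ℤ × ℤ) : {u | near r u v}.Finite := by
  apply (Set.finite_Icc ((v.1 - r, v.2 - r) : ℤ × ℤ) (v.1 + r, v.2 + r)).subset
  rintro u ⟨h1, h2, h3, h4⟩
  simp only [Set.mem_Icc, Prod.le_def]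
  omega

structure Sys {A : Type} (a₀ : A) (X : Set (ℤ × ℤ → A)) (f : (ℤ × ℤ → A) → (ℤ × ℤ → A))
    (r : ℤ) : Prop where
  r_pos : 1 ≤ r
  zero_mem : (fun _ => a₀) ∈ X
  fzero : f (fun _ => a₀) = fun _ => a₀
  loc : ∀ x : ℤ × ℤ → A, (∀ v, ∃ y ∈ X, ∀ u, near r u v → x u = y u) → x ∈ X
  maps : ∀ x ∈ X, f x ∈ X
  flocal : ∀ x ∈ X, ∀ y ∈ X, ∀ v, (∀ u, near r u v → x u = y u) → f x v = f y v
  smem : ∀ x ∈ X, ∀ w : ℤ × ℤ, (fun u => x (u + w)) ∈ X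
  equi : ∀ w : ℤ × ℤ, ∀ x ∈ X, f (fun u => x (u + w)) = fun u => f x (u + w)
  an : ∀ x ∈ X, ∀ v, ∀ᶠ n in Filter.atTop, f^[n] x v = a₀

section
variable {A : Type} {a₀ : A} {X : Set (ℤ × ℤ → A)} {f : (ℤ × ℤ → A) → (ℤ × ℤ → A)} {r : ℤ}

theorem Sys.iter_mem (h : Sys a₀ X f r) (n : ℕ) : ∀ x ∈ X, f^[n] x ∈ X := by
  induction n with
  | zero => intro x hx; simpa using hx
  | succ n ih => intro x hx; rw [Function.iterate_succ_apply]; exact ih _ (h.maps x hx)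

theorem Sys.iter_zero (h : Sys a₀ X f r) (n : ℕ) : f^[n] (fun _ => a₀) = fun _ => a₀ := by
  induction n with
  | zero => rfl
  | succ n ih => rw [Function.iterate_succ_apply, h.fzero, ih]

theorem Sys.iter_le (h : Sys a₀ X f r) {m n : ℕ} (hmn : m ≤ n) {x : ℤ × ℤ → A}
    (hx : f^[m] x = fun _ => a₀) : f^[n] x = fun _ => a₀ := by
  obtain ⟨k, rfl⟩ := Nat.exists_eq_add_of_le' hmn
  rw [Function.iterate_add_apply, hx, h.iter_zero]

theorem iter_eq_le {m n : ℕ} (hmn : m ≤ n) {x y : ℤ × ℤ → A}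
    (hx : f^[m] x = f^[m] y) : f^[n] x = f^[n] y := by
  obtain ⟨k, rfl⟩ := Nat.exists_eq_add_of_le' hmn
  rw [Function.iterate_add_apply, hx, ← Function.iterate_add_apply]

theorem Sys.iter_equi (h : Sys a₀ X f r) (n : ℕ) (w : ℤ × ℤ) : ∀ x ∈ X,
    f^[n] (fun u => x (u + w)) = fun u => f^[n] x (u + w) := by
  induction n with
  | zero => intro x hx; rfl
  | succ n ih =>
    intro x hx
    rw [Function.iterate_succ_apply, h.equi w x hx, ih _ (h.maps x hx), Function.iterate_succ_apply]

theorem Sys.iter_local (h : Sys a₀ X f r) (n : ℕ) : ∀ x ∈ X, ∀ y ∈ X, ∀ v,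
    (∀ u, near (n * r) u v → x u = y u) → f^[n] x v = f^[n] y v := by
  induction n with
  | zero =>
    intro x hx y hy v hv
    apply hv
    simp [near]
  | succ n ih =>
    intro x hx y hy v hv
    rw [Function.iterate_succ_apply, Function.iterate_succ_apply]
    apply ih _ (h.maps x hx) _ (h.maps y hy)
    intro u hu
    apply h.flocal x hx y hy
    intro w hw
    apply hv
    have e : ((n + 1 : ℕ) : ℤ) * r = n * r + r := by push_cast; ring
    rw [e]
    unfold near at *
    omega

/-- local membership, with translation -/
theorem Sys.loc' (h : Sys a₀ X f r) (x : ℤ × ℤ → A)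
    (hx : ∀ v, ∃ y ∈ X, ∃ e : ℤ × ℤ, ∀ u, near r u v → x u = y (u + e)) : x ∈ X := by
  apply h.loc
  intro v
  obtain ⟨y, hy, e, he⟩ := hx v
  exact ⟨_, h.smem y hy e, he⟩

theorem Sys.iter_zero_of_zero (h : Sys a₀ X f r) (n : ℕ) (x) (hx : x ∈ X) (v)
    (hv : ∀ u, near (n * r) u v → x u = a₀) : f^[n] x v = a₀ := by
  rw [h.iter_local n x hx _ h.zero_mem v hv, h.iter_zero]

open Classical in
/-- combination of two points -/
noncomputable def comb (S : Set (ℤ × ℤ)) (u y : ℤ × ℤ → A) : ℤ × ℤ → A :=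
  fun v => if v ∈ S then u v else y v

theorem comb_of_mem {S : Set (ℤ × ℤ)} {u y : ℤ × ℤ → A} {v} (h : v ∈ S) : comb S u y v = u v := by
  simp [comb, h]
theorem comb_of_not_mem {S : Set (ℤ × ℤ)} {u y : ℤ × ℤ → A} {v} (h : v ∉ S) :
    comb S u y v = y v := by
  simp [comb, h]

theorem comb_window {S : Set (ℤ × ℤ)} {u y : ℤ × ℤ → A} {ρ : ℤ}
    (hu : ∀ v, v ∉ S → u v = a₀) (hy : ∀ v w, w ∈ S → near (2 * ρ) v w → y v = a₀) (v : ℤ × ℤ) :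
    ((∀ w, near ρ w v → comb S u y w = u w) ∧ (∀ w, near ρ w v → y w = a₀)) ∨
    ((∀ w, near ρ w v → comb S u y w = y w) ∧ (∀ w, near ρ w v → u w = a₀)) := by
  by_cases hS : ∃ s ∈ S, near ρ s v
  · obtain ⟨s, hs, hsv⟩ := hS
    have hy' : ∀ w, near ρ w v → y w = a₀ := by
      intro w hw
      apply hy w s hs
      unfold near at *
      omega
    left
    refine ⟨?_, hy'⟩
    intro w hw
    by_cases hwS : w ∈ S
    · exact comb_of_mem hwS
    · rw [comb_of_not_mem hwS, hy' w hw, hu w hwS]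
  · right
    push Not at hS
    have : ∀ w, near ρ w v → w ∉ S := fun w hw hwS => hS w hwS hw
    exact ⟨fun w hw => comb_of_not_mem (this w hw), fun w hw => hu w (this w hw)⟩

theorem Sys.comb_mem (h : Sys a₀ X f r) {S : Set (ℤ × ℤ)} {u y : ℤ × ℤ → A}
    (hu : u ∈ X) (hy : y ∈ X) {ρ : ℤ} (hρ : r ≤ ρ) (huS : ∀ v, v ∉ S → u v = a₀)
    (hyS : ∀ v w, w ∈ S → near (2 * ρ) v w → y v = a₀) : comb S u y ∈ X := by
  apply h.loc
  intro v
  have key : ∀ w, near r w v → near ρ w v := by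
    intro w hw; unfold near at *; omega
  rcases comb_window huS hyS v with ⟨h1, -⟩ | ⟨h1, -⟩
  · exact ⟨u, hu, fun w hw => h1 w (key w hw)⟩
  · exact ⟨y, hy, fun w hw => h1 w (key w hw)⟩

theorem Sys.comb_iter (h : Sys a₀ X f r) {S : Set (ℤ × ℤ)} {u y : ℤ × ℤ → A}
    (hu : u ∈ X) (hy : y ∈ X) {ρ : ℤ} (hρ : r ≤ ρ) (huS : ∀ v, v ∉ S → u v = a₀)
    (hyS : ∀ v w, w ∈ S → near (2 * ρ) v w → y v = a₀) (m : ℕ) (hm : m * r ≤ ρ)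
    (hum : f^[m] u = fun _ => a₀) : f^[m] (comb S u y) = f^[m] y := by
  have hx := h.comb_mem hu hy hρ huS hyS
  funext v
  have key : ∀ w, near (m * r) w v → near ρ w v := by
    intro w hw; unfold near at *; omega
  rcases comb_window huS hyS v with ⟨h1, h2⟩ | ⟨h1, -⟩
  · rw [h.iter_local m _ hx u hu v (fun w hw => h1 w (key w hw)),
      h.iter_zero_of_zero m y hy v (fun w hw => h2 w (key w hw)), hum]
  · exact h.iter_local m _ hx y hy v (fun w hw => h1 w (key w hw))

/-- combinatorial closure -/
def cl (M : Set (ℤ × ℤ → A)) : Set (ℤ × ℤ → A) :=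
  {x | ∀ l : ℤ, ∃ u ∈ M, ∀ v, near l v 0 → x v = u v}

theorem subset_cl (M : Set (ℤ × ℤ → A)) : M ⊆ cl M := fun x hx _ => ⟨x, hx, fun _ _ => rfl⟩

theorem Sys.cl_subset (h : Sys a₀ X f r) {M : Set (ℤ × ℤ → A)} (hM : M ⊆ X) : cl M ⊆ X := by
  intro x hx
  apply h.loc
  intro v
  obtain ⟨u, hu, hv⟩ := hx (|v.1| + |v.2| + r)
  refine ⟨u, hM hu, fun w hw => hv w ?_⟩
  have := abs_nonneg v.1
  have := abs_nonneg v.2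
  have := le_abs_self v.1
  have := le_abs_self v.2
  have := neg_abs_le v.1
  have := neg_abs_le v.2
  unfold near at *
  simp only [Prod.fst_zero, Prod.snd_zero]
  omega

theorem Sys.an_box (h : Sys a₀ X f r) (x) (hx : x ∈ X) (B : Set (ℤ × ℤ)) (hB : B.Finite) :
    ∃ N, ∀ n ≥ N, ∀ v ∈ B, f^[n] x v = a₀ := by
  have := (Filter.eventually_all_finite hB).2 (fun v _ => h.an x hx v)
  exact Filter.eventually_atTop.1 this

end

section
variable {A : Type} [Finite A] [TopologicalSpace A] [DiscreteTopology A]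
  {a₀ : A} {X : Set (ℤ × ℤ → A)} {f : (ℤ × ℤ → A) → (ℤ × ℤ → A)} {r : ℤ}

theorem agree_open (x : ℤ × ℤ → A) (l : ℤ) (v : ℤ × ℤ) :
    IsOpen {y : ℤ × ℤ → A | ∀ u, near l u v → y u = x u} := by
  have : {y : ℤ × ℤ → A | ∀ u, near l u v → y u = x u} =
      Set.pi {u | near l u v} (fun u => {x u}) := by
    ext y; simp [Set.mem_pi]
  rw [this]
  exact isOpen_set_pi (near_finite l v) (fun _ _ => isOpen_discrete _)

theorem exists_agree_subset (x : ℤ × ℤ → A) (O : Set (ℤ × ℤ → A)) (hO : IsOpen O) (hx : x ∈ O) :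
    ∃ l : ℤ, ∀ y : ℤ × ℤ → A, (∀ u, near l u 0 → y u = x u) → y ∈ O := by
  rw [isOpen_pi_iff] at hO
  obtain ⟨I, t, ht, hsub⟩ := hO x hx
  refine ⟨∑ i ∈ I, (|i.1| + |i.2|), fun y hy => hsub ?_⟩
  intro i hi
  have hle : |i.1| + |i.2| ≤ ∑ i ∈ I, (|i.1| + |i.2|) :=
    Finset.single_le_sum (f := fun i : ℤ × ℤ => |i.1| + |i.2|)
      (fun i _ => add_nonneg (abs_nonneg _) (abs_nonneg _)) hi
  have : y i = x i := by
    apply hy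
    have := abs_nonneg i.1
    have := abs_nonneg i.2
    have := le_abs_self i.1
    have := le_abs_self i.2
    have := neg_abs_le i.1
    have := neg_abs_le i.2
    unfold near
    simp only [Prod.fst_zero, Prod.snd_zero]
    omega
  rw [this]
  exact (ht i hi).2

theorem cl_closed (M : Set (ℤ × ℤ → A)) : IsClosed (cl M) := by
  rw [← closure_subset_iff_isClosed]
  intro x hx l
  obtain ⟨y, hy, hyM⟩ := mem_closure_iff.1 hx _ (agree_open x l 0) (fun _ _ => rfl)
  obtain ⟨u, hu, huv⟩ := hyM l
  exact ⟨u, hu, fun v hv => by rw [← hy v hv, huv v hv]⟩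

/-- Baire category argument -/
theorem Sys.baire (h : Sys a₀ X f r) (M : Set (ℤ × ℤ → A)) (hM : M ⊆ X) (hne : M.Nonempty)
    (j : ℤ) : ∃ u ∈ M, ∃ l : ℤ, ∃ N : ℕ, ∀ x ∈ cl M, (∀ v, near l v 0 → x v = u v) →
      ∀ n ≥ N, ∀ v, near j v 0 → f^[n] x v = a₀ := by
  have hcl := cl_closed M
  have hclX := h.cl_subset hM
  haveI : CompactSpace (cl M) := isCompact_iff_compactSpace.1 hcl.isCompact
  haveI : Nonempty (cl M) := (hne.mono (subset_cl M)).to_subtype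
  let E : ℕ → Set (cl M) := fun N => {x | ∀ n ≥ N, ∀ v, near j v 0 → f^[n] x.1 v = a₀}
  have hE : ∀ N, IsClosed (E N) := by
    intro N
    have : E N = ⋂ n, ⋂ (_ : n ≥ N), ⋂ v, ⋂ (_ : near j v 0), {x : cl M | f^[n] x.1 v = a₀} := by
      ext x; simp [E]
    rw [this]
    refine isClosed_iInter fun n => isClosed_iInter fun _ => isClosed_iInter fun v =>
      isClosed_iInter fun _ => ?_
    rw [← isOpen_compl_iff, isOpen_iff_forall_mem_open]
    intro x hx
    refine ⟨Subtype.val ⁻¹' {y : ℤ × ℤ → A | ∀ u, near (n * r) u v → y u = x.1 u}, ?_,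
      (agree_open x.1 _ v).preimage continuous_subtype_val, fun _ _ => rfl⟩
    intro y hy
    have := h.iter_local n y.1 (hclX y.2) x.1 (hclX x.2) v hy
    simp only [Set.mem_compl_iff, Set.mem_setOf_eq] at hx ⊢
    rwa [this]
  have hU : ⋃ N, E N = Set.univ := by
    rw [Set.eq_univ_iff_forall]
    intro x
    obtain ⟨N, hN⟩ := h.an_box x.1 (hclX x.2) _ (near_finite j 0)
    exact Set.mem_iUnion.2 ⟨N, hN⟩
  obtain ⟨N, x, hx⟩ := nonempty_interior_of_iUnion_of_closed hE hU
  obtain ⟨U, hUs, hUo, hxU⟩ := mem_interior.1 hx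
  obtain ⟨O, hO, rfl⟩ := isOpen_induced_iff.1 hUo
  obtain ⟨l, hl⟩ := exists_agree_subset x.1 O hO hxU
  obtain ⟨u, hu, hxu⟩ := x.2 l
  refine ⟨u, hu, l, N, ?_⟩
  intro y hy hyu
  have : (⟨y, hy⟩ : cl M) ∈ E N := hUs (hl y (fun v hv => by rw [hyu v hv, hxu v hv]))
  exact this

/-- a class of mortal points closed under far sums is uniformly mortal -/
theorem Sys.uniform (h : Sys a₀ X f r) (M : Set (ℤ × ℤ → A)) (hM : M ⊆ X) (hne : M.Nonempty)
    (hMs : ∀ x ∈ M, ∀ w : ℤ × ℤ, (fun u => x (u + w)) ∈ M)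
    (hMf : ∀ x ∈ M, f x ∈ M)
    (hsum : ∀ u ∈ M, ∀ l : ℤ, ∃ K : ℤ, ∃ m : ℕ, ∀ y ∈ M, (∀ v, near K v 0 → y v = a₀) →
      ∃ x ∈ M, (∀ v, near l v 0 → x v = u v) ∧ f^[m] x = f^[m] y) :
    ∃ T, ∀ x ∈ M, f^[T] x = fun _ => a₀ := by
  obtain ⟨u, hu, l, N, hN⟩ := h.baire M hM hne 0
  obtain ⟨K, m, hK⟩ := hsum u hu l
  by_contra hcon
  push Not at hcon
  have hMi : ∀ n : ℕ, ∀ x ∈ M, f^[n] x ∈ M := by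
    intro n
    induction n with
    | zero => intro x hx; simpa using hx
    | succ n ih => intro x hx; rw [Function.iterate_succ_apply]; exact ih _ (hMf x hx)
  have h1 : ∀ k : ℕ, ∃ y ∈ M, f^[k] y 0 ≠ a₀ := by
    intro k
    obtain ⟨y, hy, hyk⟩ := hcon k
    obtain ⟨v, hv⟩ := Function.ne_iff.1 hyk
    refine ⟨_, hMs y hy v, ?_⟩
    rw [h.iter_equi k v y (hM hy)]
    simpa using hv
  choose y hyM hy0 using h1
  have h2 : ∀ k j : ℕ, j + N + m ≤ k → ∃ v, near K v 0 ∧ f^[j] (y k) v ≠ a₀ := by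
    intro k j hjk
    by_contra hc
    push Not at hc
    obtain ⟨x, hx, hxu, hxy⟩ := hK _ (hMi j _ (hyM k)) hc
    apply hy0 k
    have e1 : f^[k] (y k) = f^[k - j] (f^[j] (y k)) := by
      rw [← Function.iterate_add_apply, Nat.sub_add_cancel (by omega)]
    rw [e1, ← iter_eq_le (show m ≤ k - j by omega) hxy]
    exact hN x (subset_cl M hx) hxu _ (by omega) 0 (by simp [near])
  obtain ⟨z, φ, hφ, hz⟩ := CompactSpace.tendsto_subseq y
  have hag : ∀ l v, ∀ᶠ k in Filter.atTop, ∀ u, near l u v → y (φ k) u = z u := fun l v =>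
    hz.eventually ((agree_open z l v).mem_nhds (fun _ _ => rfl))
  have hzcl : z ∈ cl M := by
    intro l
    obtain ⟨k, hk⟩ := (hag l 0).exists
    exact ⟨_, hyM (φ k), fun v hv => (hk v hv).symm⟩
  have hzX := h.cl_subset hM hzcl
  obtain ⟨n, hn⟩ := h.an_box z hzX _ (near_finite K 0)
  have hn := hn n le_rfl
  obtain ⟨k, hk, hkn⟩ := ((hag (K + n * r) 0).and (Filter.eventually_ge_atTop (n + N + m))).exists
  obtain ⟨v, hvK, hv⟩ := h2 (φ k) n (hkn.trans (hφ.id_le k))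
  apply hv
  rw [h.iter_local n _ (hM (hyM _)) z hzX v, hn v hvK]
  intro u hu
  apply hk
  unfold near at *
  simp only [Prod.fst_zero, Prod.snd_zero] at *
  omega

/-- horizontally `p`-periodic, vertically bounded points -/
def Q (a₀ : A) (X : Set (ℤ × ℤ → A)) (p : ℤ) : Set (ℤ × ℤ → A) :=
  {x | x ∈ X ∧ (∀ v : ℤ × ℤ, x (v + (p, 0)) = x v) ∧
    ∃ h : ℤ, ∀ v : ℤ × ℤ, (h < v.2 ∨ v.2 < -h) → x v = a₀}

theorem periodic_mod {p : ℤ} {x : ℤ × ℤ → A} (hx : ∀ v : ℤ × ℤ, x (v + (p, 0)) = x v) (k : ℤ)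
    (i j : ℤ) : x (i + k * p, j) = x (i, j) := by
  induction k using Int.induction_on with
  | zero => simp
  | succ n ih =>
    have := hx (i + n * p, j)
    rw [← ih, ← this]
    congr 1
    ext
    · simp; ring
    · simp
  | pred n ih =>
    have := hx (i + (-n - 1) * p, j)
    rw [← ih, ← this]
    congr 1
    ext
    · simp; ring
    · simp

/-- a periodic point vanishing on a wide box vanishes on a strip -/
theorem periodic_strip {p : ℤ} (hp : 1 ≤ p) {x : ℤ × ℤ → A}
    (hx : ∀ v : ℤ × ℤ, x (v + (p, 0)) = x v) {K : ℤ} (hK : p ≤ K)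
    (hz : ∀ v, near K v 0 → x v = a₀) (v : ℤ × ℤ) (h1 : -K ≤ v.2) (h2 : v.2 ≤ K) : x v = a₀ := by
  have h3 := periodic_mod hx (v.1 / p) (v.1 % p) v.2
  have h4 := Int.emod_add_mul_ediv v.1 p
  have h5 := Int.emod_nonneg v.1 (show p ≠ 0 by omega)
  have h6 := Int.emod_lt_of_pos v.1 (show 0 < p by omega)
  have h7 : v.1 % p + v.1 / p * p = v.1 := by rw [mul_comm]; exact h4
  rw [h7] at h3
  rw [show v = (v.1, v.2) from rfl, h3]
  apply hz
  unfold near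
  simp only [Prod.fst_zero, Prod.snd_zero]
  omega

theorem Sys.Q_zero (h : Sys a₀ X f r) (p : ℤ) : (fun _ => a₀) ∈ Q a₀ X p :=
  ⟨h.zero_mem, fun _ => rfl, 0, fun _ _ => rfl⟩

theorem Sys.vb_iter (h : Sys a₀ X f r) {x} (hx : x ∈ X) {b : ℤ}
    (hb : ∀ v : ℤ × ℤ, (b < v.2 ∨ v.2 < -b) → x v = a₀) (n : ℕ) (v : ℤ × ℤ)
    (hv : b + n * r < v.2 ∨ v.2 < -(b + n * r)) : f^[n] x v = a₀ := by
  apply h.iter_zero_of_zero n x hx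
  intro u hu
  apply hb
  unfold near at hu
  omega

theorem Sys.Q_map (h : Sys a₀ X f r) (p : ℤ) (x) (hx : x ∈ Q a₀ X p) : f x ∈ Q a₀ X p := by
  obtain ⟨h1, h2, b, hb⟩ := hx
  refine ⟨h.maps x h1, ?_, b + (1 : ℕ) * r, fun v hv => h.vb_iter h1 hb 1 v hv⟩
  intro v
  have := congrFun (h.equi (p, 0) x h1) v
  rw [← this]
  congr 1
  have : (fun u => x (u + (p, 0))) = x := funext h2
  rw [this]

theorem Sys.Q_iter (h : Sys a₀ X f r) (p : ℤ) (n : ℕ) : ∀ x ∈ Q a₀ X p, f^[n] x ∈ Q a₀ X p := by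
  induction n with
  | zero => intro x hx; simpa using hx
  | succ n ih => intro x hx; rw [Function.iterate_succ_apply]; exact ih _ (h.Q_map p x hx)

theorem Sys.Q_shift (h : Sys a₀ X f r) (p : ℤ) (x) (hx : x ∈ Q a₀ X p) (w : ℤ × ℤ) :
    (fun u => x (u + w)) ∈ Q a₀ X p := by
  obtain ⟨h1, h2, b, hb⟩ := hx
  refine ⟨h.smem x h1 w, ?_, b + |w.2|, ?_⟩
  · intro v
    have := h2 (v + w)
    simp only
    rw [← this]
    congr 1
    abel
  · intro v hv
    apply hb
    simp only [Prod.snd_add]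
    have := le_abs_self w.2
    have := neg_abs_le w.2
    omega

/-- insertion of a vertically bounded point in a periodic point -/
theorem Sys.Q_comb (h : Sys a₀ X f r) (p : ℤ) {u y} (hu : u ∈ Q a₀ X p) (hy : y ∈ Q a₀ X p)
    {s b ρ : ℤ} (hρ : r ≤ ρ) (hub : ∀ v : ℤ × ℤ, (s + b < v.2 ∨ v.2 < s - b) → u v = a₀)
    (hyb : ∀ v : ℤ × ℤ, (s - b - 2 * ρ ≤ v.2 ∧ v.2 ≤ s + b + 2 * ρ) → y v = a₀) :
    ∃ x ∈ Q a₀ X p, (∀ v : ℤ × ℤ, s - b ≤ v.2 → v.2 ≤ s + b → x v = u v) ∧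
      (∀ v : ℤ × ℤ, (s + b < v.2 ∨ v.2 < s - b) → x v = y v) ∧
      ∀ m : ℕ, m * r ≤ ρ → f^[m] u = (fun _ => a₀) → f^[m] x = f^[m] y := by
  have hr := h.r_pos
  let S : Set (ℤ × ℤ) := {v | s - b ≤ v.2 ∧ v.2 ≤ s + b}
  have hmS : ∀ v : ℤ × ℤ, v ∈ S ↔ s - b ≤ v.2 ∧ v.2 ≤ s + b := fun v => Iff.rfl
  have huS : ∀ v, v ∉ S → u v = a₀ := by
    intro v hv
    apply hub
    rw [hmS] at hv
    omega
  have hyS : ∀ v w, w ∈ S → near (2 * ρ) v w → y v = a₀ := by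
    intro v w hw hvw
    apply hyb
    rw [hmS] at hw
    unfold near at hvw
    omega
  have hin : ∀ v : ℤ × ℤ, s - b ≤ v.2 → v.2 ≤ s + b → comb S u y v = u v := fun v h1 h2 =>
    comb_of_mem ⟨h1, h2⟩
  have hout : ∀ v : ℤ × ℤ, (s + b < v.2 ∨ v.2 < s - b) → comb S u y v = y v := fun v h1 =>
    comb_of_not_mem (by rw [hmS]; omega)
  obtain ⟨huX, hup, bu, hbu⟩ := hu
  obtain ⟨hyX, hyp, b', hb'⟩ := hy
  refine ⟨comb S u y, ⟨h.comb_mem huX hyX hρ huS hyS, ?_, max bu b', ?_⟩, hin, hout,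
    fun m hm hum => h.comb_iter huX hyX hρ huS hyS m hm hum⟩
  · intro v
    by_cases hv : v ∈ S
    · have hv' : v + (p, 0) ∈ S := by
        rw [hmS] at *; simpa using hv
      rw [comb_of_mem hv, comb_of_mem hv', hup]
    · have hv' : v + (p, 0) ∉ S := by
        rw [hmS] at *; simpa using hv
      rw [comb_of_not_mem hv, comb_of_not_mem hv', hyp]
  · intro v hv
    by_cases hvS : v ∈ S
    · rw [comb_of_mem hvS]; apply hbu; omega
    · rw [comb_of_not_mem hvS]; apply hb'; omega

/-- mortal points of `Q` are uniformly mortal -/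
theorem Sys.Q_uniform (h : Sys a₀ X f r) (p : ℤ) (hp : 1 ≤ p) :
    ∃ T, ∀ x ∈ Q a₀ X p, (∃ m, f^[m] x = fun _ => a₀) → f^[T] x = fun _ => a₀ := by
  have hr := h.r_pos
  have := h.uniform {x | x ∈ Q a₀ X p ∧ ∃ m, f^[m] x = fun _ => a₀} (fun x hx => hx.1.1)
    ⟨_, h.Q_zero p, 0, rfl⟩ ?_ ?_ ?_
  · obtain ⟨T, hT⟩ := this
    exact ⟨T, fun x hx hm => hT x ⟨hx, hm⟩⟩
  · rintro x ⟨hx, m, hm⟩ w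
    refine ⟨h.Q_shift p x hx w, m, ?_⟩
    rw [h.iter_equi m w x hx.1, hm]
  · rintro x ⟨hx, m, hm⟩
    refine ⟨h.Q_map p x hx, m, ?_⟩
    rw [← Function.iterate_succ_apply]
    exact h.iter_le (Nat.le_succ m) hm
  · rintro u ⟨hu, m, hm⟩ l
    obtain ⟨b, hb⟩ := hu.2.2
    have hmr : 0 ≤ m * r := by positivity
    refine ⟨max p (max b l + 2 * (r + m * r)), m, ?_⟩
    rintro y ⟨hy, m', hm'⟩ hy0
    have hy0' := periodic_strip hp hy.2.1 (le_max_left _ _) hy0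
    obtain ⟨x, hxQ, hx1, hx2, hx3⟩ := h.Q_comb p hu hy (s := 0) (b := max b l) (ρ := r + m * r)
      (by omega) (fun v hv => hb v (by omega)) (fun v hv => hy0' v (by omega) (by omega))
    have hfm := hx3 m (by omega) hm
    refine ⟨x, ⟨hxQ, m + m', ?_⟩, fun v hv => hx1 v ?_ ?_, hfm⟩
    · rw [iter_eq_le (Nat.le_add_right m m') hfm]
      exact h.iter_le (Nat.le_add_left m' m) hm'
    · unfold near at hv
      simp only [Prod.fst_zero, Prod.snd_zero] at hv
      omega
    · unfold near at hv
      simp only [Prod.fst_zero, Prod.snd_zero] at hv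
      omega

/-- cutting along walls -/
theorem Sys.cut_step (h : Sys a₀ X f r) {z} (hz : z ∈ X) {s : ℤ} 
    (hw : ∀ v : ℤ × ℤ, (s - r ≤ v.2 ∧ v.2 ≤ s + r) ∨ (-s - r ≤ v.2 ∧ v.2 ≤ -s + r) → z v = a₀) :
    comb {v | -s < v.2 ∧ v.2 < s} z (fun _ => a₀) ∈ X ∧
    f (comb {v | -s < v.2 ∧ v.2 < s} z (fun _ => a₀)) =
      comb {v | -s < v.2 ∧ v.2 < s} (f z) (fun _ => a₀) := by
  have hr := h.r_pos
  set S : Set (ℤ × ℤ) := {v | -s < v.2 ∧ v.2 < s} with hS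
  have hmS : ∀ v : ℤ × ℤ, v ∈ S ↔ -s < v.2 ∧ v.2 < s := fun v => Iff.rfl
  have hin : ∀ v ∈ S, ∀ u, near r u v → comb S z (fun _ => a₀) u = z u := by
    intro v hv u hu
    by_cases huS : u ∈ S
    · exact comb_of_mem huS
    · rw [comb_of_not_mem huS, hw]
      rw [hmS] at *
      unfold near at hu
      omega
  have hout : ∀ v, v ∉ S → ∀ u, near r u v → comb S z (fun _ => a₀) u = a₀ := by
    intro v hv u hu
    by_cases huS : u ∈ S
    · rw [comb_of_mem huS, hw]
      rw [hmS] at *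
      unfold near at hu
      omega
    · exact comb_of_not_mem huS
  have hX : comb S z (fun _ => a₀) ∈ X := by
    apply h.loc
    intro v
    by_cases hv : v ∈ S
    · exact ⟨z, hz, hin v hv⟩
    · exact ⟨_, h.zero_mem, hout v hv⟩
  refine ⟨hX, ?_⟩
  funext v
  by_cases hv : v ∈ S
  · rw [comb_of_mem hv]
    exact h.flocal _ hX _ hz v (hin v hv)
  · rw [comb_of_not_mem hv, h.flocal _ hX _ h.zero_mem v (hout v hv), h.fzero]

theorem Sys.cut_iter (h : Sys a₀ X f r) {s : ℤ} (k : ℕ) : ∀ z ∈ X,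
    (∀ n, ∀ v : ℤ × ℤ, (s - r ≤ v.2 ∧ v.2 ≤ s + r) ∨ (-s - r ≤ v.2 ∧ v.2 ≤ -s + r) →
      f^[n] z v = a₀) →
    f^[k] (comb {v | -s < v.2 ∧ v.2 < s} z (fun _ => a₀)) =
      comb {v | -s < v.2 ∧ v.2 < s} (f^[k] z) (fun _ => a₀) := by
  induction k with
  | zero => intro z hz hw; rfl
  | succ k ih =>
    intro z hz hw
    rw [Function.iterate_succ_apply, (h.cut_step hz (hw 0)).2, ih _ (h.maps z hz),
      Function.iterate_succ_apply]
    intro n v hv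
    rw [← Function.iterate_succ_apply]
    exact hw (n + 1) v hv

/-- the one-dimensional theorem -/
theorem Sys.Q_nil (h : Sys a₀ X f r) (p : ℤ) (hp : 1 ≤ p) :
    ∃ T, ∀ x ∈ Q a₀ X p, f^[T] x = fun _ => a₀ := by
  have hr := h.r_pos
  obtain ⟨T, hT⟩ := h.Q_uniform p hp
  obtain ⟨u, hu, l, N, hN⟩ := h.baire (Q a₀ X p) (fun x hx => hx.1) ⟨_, h.Q_zero p⟩ (max p r)
  obtain ⟨bu, hbu⟩ := hu.2.2
  set b := max (max bu l) 0 with hb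
  have hwall : ∀ s : ℤ, ∀ x ∈ Q a₀ X p, (∀ v : ℤ × ℤ, s - b ≤ v.2 → v.2 ≤ s + b →
      x v = u (v + (0, -s))) → ∀ n ≥ N, ∀ v : ℤ × ℤ, s - r ≤ v.2 → v.2 ≤ s + r →
      f^[n] x v = a₀ := by
    intro s x hx hxu n hn v hv1 hv2
    have hx' := h.Q_shift p x hx (0, s)
    have h1 := hN _ (subset_cl _ hx') (by
      intro v hv
      rw [hxu]
      · congr 1
        ext <;> simp
      all_goals
        unfold near at hv
        simp only [Prod.fst_zero, Prod.snd_zero, Prod.snd_add] at *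
        omega) n hn
    have h2 := periodic_strip hp (h.Q_iter p n _ hx').2.1 (le_max_left _ _) h1 (v + (0, -s))
      (by simp only [Prod.snd_add]; omega) (by simp only [Prod.snd_add]; omega)
    rw [h.iter_equi n (0, s) x hx.1] at h2
    have h3 : v + (0, -s) + (0, s) = v := by ext <;> simp
    simp only [h3] at h2
    exact h2
  refine ⟨N + T, fun q hq => ?_⟩
  obtain ⟨bq, hbq⟩ := hq.2.2
  funext v
  have hNT : 0 ≤ ((N + T : ℕ) : ℤ) * r := by positivity
  have hav := abs_nonneg v.2
  obtain ⟨s, hs⟩ : ∃ s, s = |v.2| + ((N + T : ℕ) : ℤ) * r + 2 * b + |bq| + 4 * r + 1 := ⟨_, rfl⟩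
  have habq := abs_nonneg bq
  have habq' := le_abs_self bq
  obtain ⟨x1, hx1Q, hx1a, hx1b, -⟩ := h.Q_comb p (h.Q_shift p u hu (0, -s)) hq (s := s) (b := b)
    (ρ := r) le_rfl (fun v hv => hbu _ (by simp only [Prod.snd_add]; omega))
    (fun v hv => hbq v (by omega))
  obtain ⟨x, hxQ, hxa, hxb, -⟩ := h.Q_comb p (h.Q_shift p u hu (0, s)) hx1Q (s := -s) (b := b)
    (ρ := r) le_rfl (fun v hv => hbu _ (by simp only [Prod.snd_add]; omega))
    (fun v hv => by rw [hx1b v (by omega)]; exact hbq v (by omega))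
  have hxq : ∀ w : ℤ × ℤ, -s + b < w.2 → w.2 < s - b → x w = q w := by
    intro w h1 h2
    rw [hxb w (by omega), hx1b w (by omega)]
  have w1 := hwall s x hxQ (fun w h1 h2 => by
    rw [hxb w (by omega), hx1a w h1 h2])
  have w2 := hwall (-s) x hxQ (fun w h1 h2 => by
    rw [hxa w h1 h2, neg_neg])
  have hzQ := h.Q_iter p N x hxQ
  have hwl : ∀ n, ∀ v : ℤ × ℤ, (s - r ≤ v.2 ∧ v.2 ≤ s + r) ∨ (-s - r ≤ v.2 ∧ v.2 ≤ -s + r) →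
      f^[n] (f^[N] x) v = a₀ := by
    intro n v hv
    rw [← Function.iterate_add_apply]
    rcases hv with hv | hv
    · exact w1 _ (by omega) v hv.1 hv.2
    · exact w2 _ (by omega) v hv.1 hv.2
  set S : Set (ℤ × ℤ) := {v | -s < v.2 ∧ v.2 < s} with hS
  have hmS : ∀ v : ℤ × ℤ, v ∈ S ↔ -s < v.2 ∧ v.2 < s := fun v => Iff.rfl
  have hci : ∀ k, f^[k] (comb S (f^[N] x) (fun _ => a₀)) =
      comb S (f^[k] (f^[N] x)) (fun _ => a₀) := fun k => h.cut_iter k _ hzQ.1 hwl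
  have hcQ : comb S (f^[N] x) (fun _ => a₀) ∈ Q a₀ X p := by
    refine ⟨(h.cut_step hzQ.1 (hwl 0)).1, ?_, s, ?_⟩
    · intro v
      by_cases hv : v ∈ S
      · have hv' : v + (p, 0) ∈ S := by
          rw [hmS] at *; simpa using hv
        rw [comb_of_mem hv, comb_of_mem hv', hzQ.2.1]
      · have hv' : v + (p, 0) ∉ S := by
          rw [hmS] at *; simpa using hv
        rw [comb_of_not_mem hv, comb_of_not_mem hv']
    · intro v hv
      exact comb_of_not_mem (by rw [hmS]; omega)
  have hmort : ∃ m, f^[m] (comb S (f^[N] x) (fun _ => a₀)) = fun _ => a₀ := by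
    obtain ⟨m, hm⟩ := h.an_box _ hcQ.1 _ (near_finite (max p s) 0)
    refine ⟨m, funext fun w => ?_⟩
    by_cases hw : w ∈ S
    · rw [hmS] at hw
      exact periodic_strip hp (h.Q_iter p m _ hcQ).2.1 (le_max_left _ _) (hm m le_rfl) w
        (by omega) (by omega)
    · rw [hci]; exact comb_of_not_mem hw
  have hfin := congrFun (hT _ hcQ hmort) v
  have hv1 := le_abs_self v.2
  have hv2 := neg_abs_le v.2
  rw [hci, comb_of_mem (by rw [hmS]; omega), ← Function.iterate_add_apply, add_comm] at hfin
  rw [← hfin]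
  apply h.iter_local _ _ hq.1 _ hxQ.1
  intro w hw
  unfold near at hw
  rw [hxq w (by omega) (by omega)]

/-- finitely supported points -/
def F (a₀ : A) (X : Set (ℤ × ℤ → A)) : Set (ℤ × ℤ → A) :=
  {x | x ∈ X ∧ ∃ b : ℤ, ∀ v, ¬ near b v 0 → x v = a₀}

theorem Sys.F_zero (h : Sys a₀ X f r) : (fun _ => a₀) ∈ F a₀ X :=
  ⟨h.zero_mem, 0, fun _ _ => rfl⟩

theorem Sys.F_map (h : Sys a₀ X f r) (x) (hx : x ∈ F a₀ X) : f x ∈ F a₀ X := by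
  obtain ⟨h1, b, hb⟩ := hx
  refine ⟨h.maps x h1, b + r, fun v hv => ?_⟩
  rw [h.flocal x h1 _ h.zero_mem v, h.fzero]
  intro u hu
  apply hb
  unfold near at *
  simp only [Prod.fst_zero, Prod.snd_zero] at *
  omega

theorem Sys.F_shift (h : Sys a₀ X f r) (x) (hx : x ∈ F a₀ X) (w : ℤ × ℤ) :
    (fun u => x (u + w)) ∈ F a₀ X := by
  obtain ⟨h1, b, hb⟩ := hx
  refine ⟨h.smem x h1 w, b + |w.1| + |w.2|, fun v hv => hb _ ?_⟩
  have := le_abs_self w.2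
  have := neg_abs_le w.2
  have := le_abs_self w.1
  have := neg_abs_le w.1
  unfold near at *
  simp only [Prod.fst_zero, Prod.snd_zero, Prod.fst_add, Prod.snd_add] at *
  omega

/-- the horizontal periodization of a finite point -/
def perz (w : ℤ × ℤ → A) (b p : ℤ) : ℤ × ℤ → A := fun v => w ((v.1 + b) % p - b, v.2)

theorem Sys.perz_mem (h : Sys a₀ X f r) {w} (hw : w ∈ X) {b p : ℤ} (hb0 : 0 ≤ b)
    (hb : ∀ v, ¬ near b v 0 → w v = a₀) (hp : 2 * b + 2 * r < p) : perz w b p ∈ Q a₀ X p := by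
  have hr := h.r_pos
  refine ⟨?_, ?_, b, ?_⟩
  · apply h.loc'
    intro v
    obtain ⟨k, hk⟩ : ∃ k, k = (v.1 + b + r) / p := ⟨_, rfl⟩
    refine ⟨w, hw, (-(p * k), 0), ?_⟩
    intro u hu
    have e1 := Int.emod_add_mul_ediv (v.1 + b + r) p
    have e2 := Int.emod_nonneg (v.1 + b + r) (show p ≠ 0 by omega)
    have e3 := Int.emod_lt_of_pos (v.1 + b + r) (show 0 < p by omega)
    rw [← hk] at e1
    unfold near at hu
    unfold perz
    by_cases hc : 0 ≤ u.1 + b - p * k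
    · have : (u.1 + b) % p = u.1 + b - p * k := by
        rw [← Int.sub_mul_emod_self_left (u.1 + b) p k]
        exact Int.emod_eq_of_lt hc (by omega)
      rw [this]
      congr 1
      ext
      · simp; ring
      · simp
    · have : (u.1 + b) % p = u.1 + b - p * k + p := by
        have : u.1 + b - p * (k - 1) = u.1 + b - p * k + p := by ring
        rw [← Int.sub_mul_emod_self_left (u.1 + b) p (k - 1), this]
        exact Int.emod_eq_of_lt (by omega) (by omega)
      rw [this, hb, hb]
      · unfold near
        simp only [Prod.fst_zero, Prod.snd_zero, Prod.fst_add, Prod.snd_add]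
        omega
      · unfold near
        simp only [Prod.fst_zero, Prod.snd_zero]
        omega
  · intro v
    unfold perz
    simp only [Prod.fst_add, Prod.snd_add, add_zero]
    rw [show v.1 + p + b = v.1 + b + p by ring, Int.add_emod_right]
  · intro v hv
    apply hb
    unfold near
    simp only [Prod.fst_zero, Prod.snd_zero]
    omega

/-- the gaps of a periodization -/
theorem perz_gap {w : ℤ × ℤ → A} {b p : ℤ} (hb0 : 0 ≤ b) (hp : 2 * b < p)
    (hb : ∀ v, ¬ near b v 0 → w v = a₀) (k : ℤ) (v : ℤ × ℤ) (h1 : k * p + b < v.1)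
    (h2 : v.1 < k * p + p - b) : perz w b p v = a₀ := by
  unfold perz
  have : (v.1 + b) % p = v.1 + b - p * k := by
    have := mul_comm k p
    rw [← Int.sub_mul_emod_self_left (v.1 + b) p k]
    exact Int.emod_eq_of_lt (by omega) (by omega)
  rw [this, hb]
  have := mul_comm k p
  unfold near
  simp only [Prod.fst_zero, Prod.snd_zero]
  omega

theorem perz_center {w : ℤ × ℤ → A} {b p : ℤ} (hp : 2 * b < p) (v : ℤ × ℤ)
    (h1 : -b ≤ v.1) (h2 : v.1 ≤ b) : perz w b p v = w v := by
  unfold perz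
  rw [Int.emod_eq_of_lt (by omega) (by omega)]
  congr 1
  ext <;> simp

/-- finite points do not spread vertically -/
theorem Sys.F_vert (h : Sys a₀ X f r) : ∃ K : ℤ, ∃ N : ℕ, ∀ y ∈ F a₀ X, ∀ b : ℤ, 0 ≤ b →
    (∀ v, ¬ near b v 0 → y v = a₀) → ∀ n ≥ N, ∀ v : ℤ × ℤ, (b + K < v.2 ∨ v.2 < -(b + K)) →
    f^[n] y v = a₀ := by
  have hr := h.r_pos
  obtain ⟨w, hw, l, N, hN⟩ := h.baire (F a₀ X) (fun x hx => hx.1) ⟨_, h.F_zero⟩ 0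
  obtain ⟨bw, hbw⟩ := hw.2
  obtain ⟨c, hc⟩ : ∃ c, c = max (max bw l) 0 := ⟨_, rfl⟩
  have hcw : ∀ v, ¬ near c v 0 → w v = a₀ := by
    intro v hv
    apply hbw
    unfold near at *
    omega
  obtain ⟨p, hp⟩ : ∃ p, p = 2 * c + 2 * r + 1 := ⟨_, rfl⟩
  obtain ⟨m, hm⟩ := h.Q_nil p (by omega)
  have hWQ := h.perz_mem hw.1 (b := c) (p := p) (by omega) hcw (by omega)
  obtain ⟨W, hW⟩ : ∃ W, W = perz w c p := ⟨_, rfl⟩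
  rw [← hW] at hWQ
  have hmr : 0 ≤ m * r := by positivity
  obtain ⟨ρ, hρ⟩ : ∃ ρ, ρ = r + m * r := ⟨_, rfl⟩
  refine ⟨c + 2 * ρ, max N m, ?_⟩
  intro y hy b hb0 hyb n hn v hv
  -- translate so that `v` becomes the origin
  have hW'Q := h.Q_shift p W hWQ (-v)
  let S : Set (ℤ × ℤ) := {u | v.2 - c ≤ u.2 ∧ u.2 ≤ v.2 + c}
  have hmS : ∀ u : ℤ × ℤ, u ∈ S ↔ v.2 - c ≤ u.2 ∧ u.2 ≤ v.2 + c := fun v => Iff.rfl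
  have huS : ∀ u, u ∉ S → (fun u => W (u + -v)) u = a₀ := by
    intro u hu
    simp only [hW, perz]
    apply hcw
    rw [hmS] at hu
    unfold near
    simp only [Prod.fst_zero, Prod.snd_zero, Prod.snd_add, Prod.snd_neg]
    omega
  have hyS : ∀ u s, s ∈ S → near (2 * ρ) u s → y u = a₀ := by
    intro u s hs hus
    apply hyb
    rw [hmS] at hs
    unfold near at *
    simp only [Prod.fst_zero, Prod.snd_zero]
    omega
  have hx := h.comb_mem hW'Q.1 hy.1 (show r ≤ ρ by omega) huS hyS
  have hxm := h.comb_iter hW'Q.1 hy.1 (show r ≤ ρ by omega) huS hyS m (by omega) (hm _ hW'Q)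
  obtain ⟨x, hxdef⟩ : ∃ x, x = comb S (fun u => W (u + -v)) y := ⟨_, rfl⟩
  rw [← hxdef] at hx hxm
  rw [← iter_eq_le (show m ≤ n by omega) hxm]
  have hx' := h.smem x hx v
  have hgap : ∀ k : ℤ, ∀ u : ℤ × ℤ, k * p + c < u.1 → u.1 < k * p + p - c →
      ¬ near b (u + v) 0 → x (u + v) = a₀ := by
    intro k u h1 h2 h3
    rw [hxdef]
    by_cases hu : u + v ∈ S
    · rw [comb_of_mem hu]
      simp only [add_neg_cancel_right, hW]
      exact perz_gap (by omega) (by omega) hcw k u h1 h2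
    · rw [comb_of_not_mem hu]
      exact hyb _ h3
  have hfar : ∀ u : ℤ × ℤ, ¬ near b (u + v) 0 → (c < u.2 ∨ u.2 < -c) → x (u + v) = a₀ := by
    intro u h1 h2
    rw [hxdef, comb_of_not_mem]
    · exact hyb _ h1
    · rw [hmS]
      simp only [Prod.snd_add]
      omega
  have hcl : (fun u => x (u + v)) ∈ cl (F a₀ X) := by
    intro L
    -- cut at a gap
    have a1 := le_abs_self v.1
    have a2 := neg_abs_le v.1
    have a3 := le_abs_self v.2
    have a4 := neg_abs_le v.2
    have a5 := le_abs_self L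
    have a6 := abs_nonneg L
    obtain ⟨k, hk⟩ : ∃ k : ℤ, k = |L| + b + |v.1| + r := ⟨_, rfl⟩
    have hkp : k ≤ k * p := le_mul_of_one_le_right (by have := abs_nonneg v.1; omega) (by omega)
    obtain ⟨g, hg⟩ : ∃ g : ℤ, g = k * p + c + r := ⟨_, rfl⟩
    have hg2 : (-k - 1) * p = -(k * p) - p := by ring
    let C : Set (ℤ × ℤ) := {u | -g ≤ u.1 ∧ u.1 ≤ g}
    have hmC : ∀ u : ℤ × ℤ, u ∈ C ↔ -g ≤ u.1 ∧ u.1 ≤ g := fun v => Iff.rfl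
    have hgap' : ∀ u : ℤ × ℤ, (g - r < u.1 ∧ u.1 ≤ g + r) ∨ (-g - r ≤ u.1 ∧ u.1 < -g + r) →
        x (u + v) = a₀ := by
      intro u hu
      have hnb : ¬ near b (u + v) 0 := by
        unfold near
        simp only [Prod.fst_zero, Prod.snd_zero, Prod.fst_add, Prod.snd_add]
        omega
      rcases hu with hu | hu
      · exact hgap k u (by omega) (by omega) hnb
      · exact hgap (-k - 1) u (by omega) (by omega) hnb
    refine ⟨comb C (fun u => x (u + v)) (fun _ => a₀), ⟨?_, g + c + b + |v.2|, ?_⟩, ?_⟩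
    · apply h.loc
      intro u
      by_cases hu : u ∈ C
      · refine ⟨_, hx', fun u' hu' => ?_⟩
        by_cases hu'C : u' ∈ C
        · exact comb_of_mem hu'C
        · rw [comb_of_not_mem hu'C, hgap']
          rw [hmC] at *
          unfold near at hu'
          omega
      · refine ⟨_, h.zero_mem, fun u' hu' => ?_⟩
        by_cases hu'C : u' ∈ C
        · rw [comb_of_mem hu'C, hgap']
          rw [hmC] at *
          unfold near at hu'
          omega
        · exact comb_of_not_mem hu'C
    · intro u hu
      by_cases huC : u ∈ C
      · rw [comb_of_mem huC]
        rw [hmC] at huC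
        unfold near at hu
        simp only [Prod.fst_zero, Prod.snd_zero] at hu
        apply hfar
        · unfold near
          simp only [Prod.fst_zero, Prod.snd_zero, Prod.fst_add, Prod.snd_add]
          omega
        · omega
      · exact comb_of_not_mem huC
    · intro u hu
      rw [comb_of_mem]
      rw [hmC]
      unfold near at hu
      simp only [Prod.fst_zero, Prod.snd_zero] at hu
      omega
  have := hN _ hcl ?_ n (by omega) 0 (by simp [near])
  · rw [h.iter_equi n v x hx] at this
    simpa using this
  · intro u hu
    unfold near at hu
    simp only [Prod.fst_zero, Prod.snd_zero] at hu
    rw [hxdef, comb_of_mem]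
    · simp only [add_neg_cancel_right, hW]
      exact perz_center (by omega) u (by omega) (by omega)
    · rw [hmS]
      simp only [Prod.snd_add]
      omega

/-- transposed system -/
theorem Sys.transpose (h : Sys a₀ X f r) :
    Sys a₀ {x | (fun v => x (Prod.swap v)) ∈ X}
      (fun x v => f (fun v => x (Prod.swap v)) (Prod.swap v)) r := by
  have hn : ∀ (s : ℤ) (u v : ℤ × ℤ), near s u v → near s u.swap v.swap := by
    intro s u v huv
    unfold near at *
    simp only [Prod.fst_swap, Prod.snd_swap]
    omega
  have hit : ∀ n x v, (fun x v => f (fun v => x (Prod.swap v)) (Prod.swap v))^[n] x v =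
      f^[n] (fun v => x (Prod.swap v)) (Prod.swap v) := by
    intro n
    induction n with
    | zero => intro x v; simp
    | succ n ih =>
      intro x v
      rw [Function.iterate_succ_apply, ih, Function.iterate_succ_apply]
      simp
  refine ⟨h.r_pos, h.zero_mem, ?_, ?_, ?_, ?_, ?_, ?_, ?_⟩
  · funext v
    rw [h.fzero]
  · intro x hx
    apply h.loc
    intro v
    obtain ⟨y, hy, hxy⟩ := hx v.swap
    refine ⟨_, hy, fun u hu => hxy _ (hn _ _ _ hu)⟩
  · intro x hx
    simpa using h.maps _ hx
  · intro x hx y hy v hv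
    apply h.flocal _ hx _ hy
    intro u hu
    apply hv
    simpa using hn _ _ _ hu
  · intro x hx w
    have := h.smem _ hx w.swap
    simpa [Prod.swap_add] using this
  · intro w x hx
    funext v
    have := congrFun (h.equi w.swap _ hx) v.swap
    simpa [Prod.swap_add] using this
  · intro x hx v
    simp only [hit]
    exact h.an _ hx _

theorem transpose_iter (f : (ℤ × ℤ → A) → (ℤ × ℤ → A)) (n : ℕ) : ∀ x v,
    (fun x v => f (fun v => x (Prod.swap v)) (Prod.swap v))^[n] x v =
      f^[n] (fun v => x (Prod.swap v)) (Prod.swap v) := by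
  induction n with
  | zero => intro x v; simp
  | succ n ih =>
    intro x v
    rw [Function.iterate_succ_apply, ih, Function.iterate_succ_apply]
    simp

theorem Sys.F_horiz (h : Sys a₀ X f r) : ∃ K : ℤ, ∃ N : ℕ, ∀ y ∈ F a₀ X, ∀ b : ℤ, 0 ≤ b →
    (∀ v, ¬ near b v 0 → y v = a₀) → ∀ n ≥ N, ∀ v : ℤ × ℤ, (b + K < v.1 ∨ v.1 < -(b + K)) →
    f^[n] y v = a₀ := by
  obtain ⟨K, N, hK⟩ := h.transpose.F_vert
  have hn : ∀ (s : ℤ) (u : ℤ × ℤ), near s u.swap 0 → near s u 0 := by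
    intro s u huv
    unfold near at *
    simp only [Prod.fst_swap, Prod.snd_swap, Prod.fst_zero, Prod.snd_zero] at *
    omega
  refine ⟨K, N, ?_⟩
  intro y hy b hb hyb n hnN v hv
  have hyb' : ∀ v, ¬ near b v 0 → (fun v => y (Prod.swap v)) v = a₀ := by
    intro v hv
    apply hyb
    intro hc
    exact hv (hn _ _ hc)
  have := hK (fun v => y (Prod.swap v)) ⟨by simpa using hy.1, b, hyb'⟩ b hb hyb' n hnN v.swap
    (by simpa using hv)
  rw [transpose_iter] at this
  simpa using this

theorem Sys.F_mortal (h : Sys a₀ X f r) (y) (hy : y ∈ F a₀ X) : ∃ m, f^[m] y = fun _ => a₀ := by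
  obtain ⟨K, N, hK⟩ := h.F_vert
  obtain ⟨K', N', hK'⟩ := h.F_horiz
  obtain ⟨b, hb⟩ := hy.2
  have hb' : ∀ v, ¬ near (max b 0) v 0 → y v = a₀ := by
    intro v hv
    apply hb
    unfold near at *
    omega
  obtain ⟨m, hm⟩ := h.an_box y hy.1 _ (near_finite (max b 0 + max K K') 0)
  refine ⟨max m (max N N'), funext fun v => ?_⟩
  by_cases hv : near (max b 0 + max K K') v 0
  · exact hm _ (le_max_left _ _) v hv
  · by_cases hv2 : (max b 0 + K < v.2 ∨ v.2 < -(max b 0 + K))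
    · exact hK y hy _ (le_max_right _ _) hb' _ (by omega) v hv2
    · apply hK' y hy _ (le_max_right _ _) hb' _ (by omega) v
      unfold near at hv
      simp only [Prod.fst_zero, Prod.snd_zero] at hv
      omega

theorem Sys.F_nil (h : Sys a₀ X f r) : ∃ T, ∀ x ∈ F a₀ X, f^[T] x = fun _ => a₀ := by
  have hr := h.r_pos
  refine h.uniform (F a₀ X) (fun x hx => hx.1) ⟨_, h.F_zero⟩ h.F_shift h.F_map ?_
  intro u hu l
  obtain ⟨m, hm⟩ := h.F_mortal u hu
  obtain ⟨b, hb⟩ := hu.2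
  have hmr : 0 ≤ m * r := by positivity
  refine ⟨max b l + 2 * (r + m * r), m, ?_⟩
  intro y hy hy0
  let S : Set (ℤ × ℤ) := {v | near (max b l) v 0}
  have hmS : ∀ v : ℤ × ℤ, v ∈ S ↔ near (max b l) v 0 := fun v => Iff.rfl
  have huS : ∀ v, v ∉ S → u v = a₀ := by
    intro v hv
    apply hb
    rw [hmS] at hv
    unfold near at *
    omega
  have hyS : ∀ v s, s ∈ S → near (2 * (r + m * r)) v s → y v = a₀ := by
    intro v s hs hvs
    apply hy0
    rw [hmS] at hs
    unfold near at *
    simp only [Prod.fst_zero, Prod.snd_zero] at *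
    omega
  obtain ⟨b', hb'⟩ := hy.2
  refine ⟨comb S u y, ⟨h.comb_mem hu.1 hy.1 (by omega) huS hyS, max b b', ?_⟩, ?_,
    h.comb_iter hu.1 hy.1 (show r ≤ r + m * r by omega) huS hyS m (by omega) hm⟩
  · intro v hv
    by_cases hvS : v ∈ S
    · rw [comb_of_mem hvS]; apply hb; unfold near at *; omega
    · rw [comb_of_not_mem hvS]; apply hb'; unfold near at *; omega
  · intro v hv
    apply comb_of_mem
    rw [hmS]
    unfold near at *
    omega

end

theorem fold_aux {B : Type} (r : ℤ) (hr : 1 ≤ r) (g : ℤ → B) (t p : ℤ) (hp : 2 * r + 1 ≤ p)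
    (hg : ∀ j, -r ≤ j → j ≤ r → g (t + j) = g (t + p + j)) :
    ∃ g' : ℤ → B, (∀ i < t, g' i = g i) ∧
      (∀ c, ∃ e, ∀ i, -r ≤ i - c → i - c ≤ r → g' i = g (i + e)) ∧
      ∀ i ≥ t, g' (i + p) = g' i := by
  refine ⟨fun i => if i < t then g i else g (t + (i - t) % p), ?_, ?_, ?_⟩
  · intro i hi
    simp [hi]
  · intro c
    by_cases hc : c < t
    · refine ⟨0, fun i h1 h2 => ?_⟩
      by_cases hi : i < t
      · simp [hi]
      · simp only [hi, if_false]
        rw [Int.emod_eq_of_lt (by omega) (by omega)]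
        congr 1
        ring
    · obtain ⟨q, hq⟩ : ∃ q, q = (c - t) / p := ⟨_, rfl⟩
      have e1 := Int.emod_add_mul_ediv (c - t) p
      have e2 := Int.emod_nonneg (c - t) (show p ≠ 0 by omega)
      have e3 := Int.emod_lt_of_pos (c - t) (show 0 < p by omega)
      rw [← hq] at e1
      have hq0 : 0 ≤ q := by rw [hq]; exact Int.ediv_nonneg (by omega) (by omega)
      refine ⟨-(p * q), fun i h1 h2 => ?_⟩
      by_cases hi : i < t
      · have : q = 0 := by
          by_contra hne
          have : p ≤ p * q := le_mul_of_one_le_right (by omega) (by omega)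
          omega
        simp [hi, this]
      · simp only [hi, if_false]
        rcases lt_or_ge (i - p * q) t with h3 | h3
        · have : (i - t) % p = i - p * q - t + p := by
            have e : i - t - p * (q - 1) = i - p * q - t + p := by ring
            rw [← Int.sub_mul_emod_self_left (i - t) p (q - 1), e]
            exact Int.emod_eq_of_lt (by omega) (by omega)
          rw [this]
          have h4 := hg (i - p * q - t) (by omega) (by omega)
          rw [show t + (i - p * q - t + p) = t + p + (i - p * q - t) by ring, ← h4]
          congr 1
          ring
        · rcases lt_or_ge (i - p * q) (t + p) with h5 | h5
          · have : (i - t) % p = i - p * q - t := by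
              have e : i - t - p * q = i - p * q - t := by ring
              rw [← Int.sub_mul_emod_self_left (i - t) p q, e]
              exact Int.emod_eq_of_lt (by omega) (by omega)
            rw [this]
            congr 1
            ring
          · have : (i - t) % p = i - p * q - t - p := by
              have e : i - t - p * (q + 1) = i - p * q - t - p := by ring
              rw [← Int.sub_mul_emod_self_left (i - t) p (q + 1), e]
              exact Int.emod_eq_of_lt (by omega) (by omega)
            rw [this]
            have h4 := hg (i - p * q - t - p) (by omega) (by omega)
            rw [h4]
            congr 1
            ring
  · intro i hi
    have h1 : ¬ i + p < t := by omega
    have h2 : ¬ i < t := by omega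
    simp only [h1, h2, if_false]
    rw [show i + p - t = i - t + p by ring, Int.add_emod_right]

theorem fold (K : Type) [Finite K] (r : ℤ) (hr : 1 ≤ r) : ∃ P : ℕ, 
    ∀ {B : Type} (dec : K → B) (g : ℤ → B) (t₀ : ℤ), (∀ i ≥ t₀, ∃ k, g i = dec k) →
    ∃ g' : ℤ → B, (∀ i ≤ t₀, g' i = g i) ∧
      (∀ c, ∃ e, ∀ i, -r ≤ i - c → i - c ≤ r → g' i = g (i + e)) ∧
      ∃ p : ℕ, 1 ≤ p ∧ p ≤ P ∧ ∃ t, ∀ i ≥ t, g' (i + p) = g' i := by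
  obtain ⟨w, rfl⟩ := Int.eq_ofNat_of_zero_le (show 0 ≤ r by omega)
  obtain ⟨C, hC⟩ : ∃ C, C = Nat.card (Finset.Icc (-(w : ℤ)) w → K) := ⟨_, rfl⟩
  refine ⟨C * (2 * w + 1), ?_⟩
  intro B dec g t₀ hg
  have : Nonempty K := ⟨(hg t₀ le_rfl).choose⟩
  choose! κ hκ using hg
  let σ : Fin (C + 1) → (Finset.Icc (-(w : ℤ)) w → K) := fun k j =>
    κ (t₀ + w + 1 + (k : ℕ) * (2 * w + 1) + j)
  have hσ : ¬ Function.Injective σ := by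
    intro hinj
    have := Nat.card_le_card_of_injective σ hinj
    rw [← hC, Nat.card_eq_fintype_card, Fintype.card_fin] at this
    omega
  obtain ⟨k₁, k₂, hlt, heq⟩ : ∃ k₁ k₂ : Fin (C + 1), k₁ < k₂ ∧ σ k₁ = σ k₂ := by
    simp only [Function.Injective, not_forall] at hσ
    obtain ⟨a, b, hab, hne⟩ := hσ
    rcases lt_or_gt_of_ne hne with h | h
    · exact ⟨a, b, h, hab⟩
    · exact ⟨b, a, h, hab.symm⟩
  have hlt' : (k₁ : ℕ) < k₂ := hlt
  have hk2 := k₂.2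
  obtain ⟨d, hd⟩ : ∃ d : ℕ, (k₂ : ℕ) = k₁ + d := Nat.exists_eq_add_of_le hlt'.le
  have hd1 : 1 ≤ d := by omega
  have hpp : 2 * w + 1 ≤ d * (2 * w + 1) := Nat.le_mul_of_pos_left _ hd1
  have hk1 : 0 ≤ ((k₁ : ℕ) : ℤ) * (2 * w + 1) := by positivity
  have hpp' : 2 * (w : ℤ) + 1 ≤ ((d * (2 * w + 1) : ℕ) : ℤ) := by exact_mod_cast hpp
  obtain ⟨g', h1, h2, h3⟩ := fold_aux (w : ℤ) hr g (t₀ + w + 1 + (k₁ : ℕ) * (2 * w + 1))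
    ((d * (2 * w + 1) : ℕ) : ℤ) hpp' (by
      intro j hj1 hj2
      have := congrFun heq ⟨j, Finset.mem_Icc.2 ⟨hj1, hj2⟩⟩
      simp only [σ] at this
      rw [hκ _ (by omega), hκ _ (by omega), this]
      congr 2
      rw [hd]
      push_cast
      ring)
  refine ⟨g', fun i hi => h1 i (by omega), h2, d * (2 * w + 1), by omega,
    Nat.mul_le_mul_right _ (by omega), _, h3⟩

theorem ray_nat {B : Type} {g : ℤ → B} {t : ℤ} {p : ℕ} (hg : ∀ i ≥ t, g (i + p) = g i) (n : ℕ) :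
    ∀ i ≥ t, g (i + n * p) = g i := by
  induction n with
  | zero => intro i _; simp
  | succ n ih =>
    intro i hi
    have h0 : (0 : ℤ) ≤ n * p := by positivity
    rw [← ih i hi, ← hg (i + n * p) (by omega)]
    congr 1
    push_cast
    ring

theorem ray_int {B : Type} {g : ℤ → B} {t : ℤ} {p : ℕ} (hg : ∀ i ≥ t, g (i + p) = g i) {P : ℕ}
    (hP : p ∣ P) (k : ℤ) (i : ℤ) (hi : t ≤ i) (hik : t ≤ i + k * P) : g (i + k * P) = g i := by
  obtain ⟨d, rfl⟩ := hP
  rcases le_total 0 k with hk | hk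
  · obtain ⟨n, rfl⟩ := Int.eq_ofNat_of_zero_le hk
    rw [← ray_nat hg (n * d) i hi]
    congr 1
    push_cast
    ring
  · obtain ⟨n, hn⟩ := Int.eq_ofNat_of_zero_le (show 0 ≤ -k by omega)
    rw [← ray_nat hg (n * d) _ hik]
    congr 1
    push_cast
    rw [show k = -(n : ℤ) by omega]
    ring

section
variable {A : Type} [Finite A] [TopologicalSpace A] [DiscreteTopology A]
  {a₀ : A} {X : Set (ℤ × ℤ → A)} {f : (ℤ × ℤ → A) → (ℤ × ℤ → A)} {r : ℤ}

/-- periodic tails die -/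
theorem Sys.tail (h : Sys a₀ X f r) {P : ℤ} {M : ℕ} (hM : ∀ q ∈ Q a₀ X P, f^[M] q = fun _ => a₀)
    {x : ℤ × ℤ → A} (hx : x ∈ X) {b : ℤ}
    (hb : ∀ v : ℤ × ℤ, (b < v.2 ∨ v.2 < -b) → x v = a₀) (I : Set ℤ)
    (hcov : ∀ c : ℤ, ∃ k : ℤ, ∀ i, -r ≤ i - c → i - c ≤ r → i + k * P ∈ I)
    (hcons : ∀ i ∈ I, ∀ k : ℤ, i + k * P ∈ I → ∀ j, x (i + k * P, j) = x (i, j))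
    (v : ℤ × ℤ) (hv : ∀ i, -(M * r) ≤ i - v.1 → i - v.1 ≤ M * r → i ∈ I) :
    f^[M] x v = a₀ := by
  have hr := h.r_pos
  have hcov' : ∀ c : ℤ, ∃ k : ℤ, c + k * P ∈ I := fun c => by
    obtain ⟨k, hk⟩ := hcov c
    exact ⟨k, hk c (by omega) (by omega)⟩
  choose κ hκ using hcov'
  have key : ∀ i k j : ℤ, i + k * P ∈ I → x (i + κ i * P, j) = x (i + k * P, j) := by
    intro i k j hik
    have e : i + κ i * P = i + k * P + (κ i - k) * P := by ring
    rw [e]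
    apply hcons _ hik
    rw [← e]
    exact hκ i
  let z : ℤ × ℤ → A := fun v => x (v.1 + κ v.1 * P, v.2)
  have hz : z ∈ Q a₀ X P := by
    refine ⟨?_, ?_, b, fun v hv => hb _ hv⟩
    · apply h.loc'
      intro v
      obtain ⟨k, hk⟩ := hcov v.1
      refine ⟨x, hx, (k * P, 0), fun u hu => ?_⟩
      unfold near at hu
      have := key u.1 k u.2 (hk u.1 (by omega) (by omega))
      simp only [z]
      rw [this]
      congr 1
      ext <;> simp
    · intro v
      simp only [z, Prod.fst_add, Prod.snd_add, add_zero]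
      have e : v.1 + P + κ (v.1 + P) * P = v.1 + (κ (v.1 + P) + 1) * P := by ring
      rw [e]
      symm
      apply key
      rw [← e]
      exact hκ _
  rw [h.iter_local M x hx z hz.1 v, hM z hz]
  intro u hu
  unfold near at hu
  have := key u.1 0 u.2 (by simpa using hv u.1 (by omega) (by omega))
  simpa [z] using this.symm

theorem Sys.main (h : Sys a₀ X f r) (R : ℕ)
    (hglue : ∀ S T : Set (ℤ × ℤ),
      (∃ I J : Set ℤ, I.OrdConnected ∧ J.OrdConnected ∧ S = I ×ˢ J) →
      (∃ I J : Set ℤ, I.OrdConnected ∧ J.OrdConnected ∧ T = I ×ˢ J) →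
      (∀ a ∈ S, ∀ b ∈ T, (R : ℤ) ≤ max |a.1 - b.1| |a.2 - b.2|) →
      ∀ p ∈ X, ∀ q ∈ X, ∃ x ∈ X, (∀ v ∈ S, x v = p v) ∧ (∀ v ∈ T, x v = q v)) :
    ∃ n : ℕ, ∀ x ∈ X, f^[n] x = fun _ => a₀ := by
  have hr := h.r_pos
  obtain ⟨P₀, hfold⟩ := fold (Finset.Icc (-(R : ℤ)) R → A) r hr
  obtain ⟨P, hPdef⟩ : ∃ P : ℕ, P = P₀.factorial := ⟨_, rfl⟩
  have hP1 : 1 ≤ P := by rw [hPdef]; exact Nat.factorial_pos _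
  obtain ⟨M, hM⟩ := h.Q_nil (P : ℤ) (by exact_mod_cast hP1)
  obtain ⟨T, hT⟩ := h.F_nil
  -- the four elementary gluings
  have glueH : ∀ (a : ℤ) (p q : ℤ × ℤ → A), p ∈ X → q ∈ X → ∃ x ∈ X,
      (∀ v : ℤ × ℤ, v.1 ≤ a → x v = p v) ∧ (∀ v : ℤ × ℤ, a + R ≤ v.1 → x v = q v) := by
    intro a p q hp hq
    obtain ⟨x, hx, h1, h2⟩ := hglue (Set.Iic a ×ˢ Set.univ) (Set.Ici (a + R) ×ˢ Set.univ)
      ⟨_, _, Set.ordConnected_Iic, Set.ordConnected_univ, rfl⟩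
      ⟨_, _, Set.ordConnected_Ici, Set.ordConnected_univ, rfl⟩
      (by
        intro u hu v hv
        simp only [Set.mem_prod, Set.mem_Iic, Set.mem_Ici, Set.mem_univ, and_true] at hu hv
        refine le_max_of_le_left ?_
        have := neg_le_abs (u.1 - v.1)
        omega) p hp q hq
    exact ⟨x, hx, fun v hv => h1 v (by simpa using hv), fun v hv => h2 v (by simpa using hv)⟩
  have glueV : ∀ (a : ℤ) (p q : ℤ × ℤ → A), p ∈ X → q ∈ X → ∃ x ∈ X,
      (∀ v : ℤ × ℤ, v.2 ≤ a → x v = p v) ∧ (∀ v : ℤ × ℤ, a + R ≤ v.2 → x v = q v) := by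
    intro a p q hp hq
    obtain ⟨x, hx, h1, h2⟩ := hglue (Set.univ ×ˢ Set.Iic a) (Set.univ ×ˢ Set.Ici (a + R))
      ⟨_, _, Set.ordConnected_univ, Set.ordConnected_Iic, rfl⟩
      ⟨_, _, Set.ordConnected_univ, Set.ordConnected_Ici, rfl⟩
      (by
        intro u hu v hv
        simp only [Set.mem_prod, Set.mem_Iic, Set.mem_Ici, Set.mem_univ, true_and] at hu hv
        refine le_max_of_le_right ?_
        have := neg_le_abs (u.2 - v.2)
        omega) p hp q hq
    exact ⟨x, hx, fun v hv => h1 v (by simpa using hv), fun v hv => h2 v (by simpa using hv)⟩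
  refine ⟨T + M, ?_⟩
  -- it is enough to treat the origin
  suffices hmain : ∀ y ∈ X, f^[T + M] y 0 = a₀ by
    intro y hy
    funext v
    have := hmain _ (h.smem y hy v)
    rw [h.iter_equi _ v y hy] at this
    simpa using this
  intro y hy
  obtain ⟨L, hL⟩ : ∃ L : ℤ, L = ((T + M : ℕ) : ℤ) * r := ⟨_, rfl⟩
  have hL0 : 0 ≤ L := by rw [hL]; positivity
  -- step 1: zeros on the left and on the right
  obtain ⟨x₀, hx₀, hx₀a, hx₀b⟩ := glueH L y _ hy h.zero_mem
  obtain ⟨x₁, hx₁, hx₁a, hx₁b⟩ := glueH (-L - R) _ x₀ h.zero_mem hx₀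
  -- step 2: zeros above and below
  obtain ⟨x₁', hx₁', hx₁a', hx₁b'⟩ := glueV L x₁ _ hx₁ h.zero_mem
  obtain ⟨x₂, hx₂, hx₂a, hx₂b⟩ := glueV (-L - R) _ x₁' h.zero_mem hx₁'
  have hmid : ∀ v : ℤ × ℤ, -L ≤ v.2 → v.2 ≤ L → x₂ v = x₁ v := by
    intro v h1 h2
    rw [hx₂b v (by omega), hx₁a' v h2]
  have hin : ∀ v, near L v 0 → x₂ v = y v := by
    intro v hv
    unfold near at hv
    simp only [Prod.fst_zero, Prod.snd_zero] at hv
    rw [hmid v (by omega) (by omega), hx₁b v (by omega), hx₀a v (by omega)]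
  have hvert : ∀ v : ℤ × ℤ, (L + R ≤ v.2 ∨ v.2 ≤ -L - R) → x₂ v = a₀ := by
    intro v hv
    by_cases h1 : v.2 ≤ -L - R
    · exact hx₂a v h1
    · rw [hx₂b v (by omega), hx₁b' v (by omega)]
  have hside : ∀ v : ℤ × ℤ, -L ≤ v.2 → v.2 ≤ L → (L + R ≤ v.1 ∨ v.1 ≤ -L - R) → x₂ v = a₀ := by
    intro v h1 h2 hv
    rw [hmid v h1 h2]
    by_cases h3 : v.1 ≤ -L - R
    · exact hx₁a v h3
    · rw [hx₁b v (by omega), hx₀b v (by omega)]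
  -- step 3: fold the tails
  let ext : (Finset.Icc (-(R : ℤ)) R → A) → ℤ → A := fun k j =>
    if hj : j ∈ Finset.Icc (-(R : ℤ)) R then k ⟨j, hj⟩ else a₀
  let dec : (Finset.Icc (-(R : ℤ)) R → A) → (ℤ → A) := fun k j =>
    if L < j then ext k (j - L) else if j < -L then ext k (j + L) else a₀
  have hdec : ∀ i : ℤ, (L + R ≤ i ∨ i ≤ -L - R) → ∃ k, (fun j => x₂ (i, j)) = dec k := by
    intro i hi
    refine ⟨fun j => if 0 < j.1 then x₂ (i, j.1 + L) else x₂ (i, j.1 - L), ?_⟩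
    funext j
    simp only [dec, ext, Finset.mem_Icc]
    split_ifs with h1 h2 h3 h4 h5 h6
    · congr 2; ring
    · omega
    · exact hvert _ (by simp only; omega)
    · omega
    · congr 2; ring
    · exact hvert _ (by simp only; omega)
    · exact hside _ (by simp only; omega) (by simp only; omega) hi
  obtain ⟨g₁, hg₁a, hg₁b, p₁, hp₁, hp₁', t₁, ht₁⟩ := hfold dec (fun i j => x₂ (i, j)) (L + R)
    (fun i hi => hdec i (Or.inl hi))
  obtain ⟨g₂, hg₂a, hg₂b, p₂, hp₂, hp₂', t₂, ht₂⟩ := hfold dec (fun i => g₁ (-i)) (L + R)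
    (fun i hi => by
      rw [hg₁a (-i) (by omega)]
      exact hdec (-i) (Or.inr (by omega)))
  obtain ⟨x₃, hx₃⟩ : ∃ x₃ : ℤ × ℤ → A, x₃ = fun v => g₂ (-v.1) v.2 := ⟨_, rfl⟩
  have hwin : ∀ c : ℤ, ∃ e : ℤ, ∀ i, -r ≤ i - c → i - c ≤ r → ∀ j, x₃ (i, j) = x₂ (i + e, j) := by
    intro c
    obtain ⟨e₂, he₂⟩ := hg₂b (-c)
    obtain ⟨e₁, he₁⟩ := hg₁b (c - e₂)
    refine ⟨-e₂ + e₁, fun i h1 h2 j => ?_⟩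
    rw [hx₃]
    simp only
    rw [he₂ (-i) (by omega) (by omega), he₁ _ (by omega) (by omega)]
    congr 2
    ring
  have hx₃X : x₃ ∈ X := by
    apply h.loc'
    intro v
    obtain ⟨e, he⟩ := hwin v.1
    refine ⟨x₂, hx₂, (e, 0), fun u hu => ?_⟩
    unfold near at hu
    have := he u.1 (by omega) (by omega) u.2
    rw [show u = (u.1, u.2) from rfl, this]
    congr 1
    ext <;> simp
  have hx₃in : ∀ v, near L v 0 → x₃ v = y v := by
    intro v hv
    rw [← hin v hv, hx₃]
    unfold near at hv
    simp only [Prod.fst_zero, Prod.snd_zero] at hv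
    simp only
    rw [hg₂a (-v.1) (by omega), neg_neg, hg₁a v.1 (by omega)]
  have hx₃v : ∀ v : ℤ × ℤ, (L + R < v.2 ∨ v.2 < -(L + R)) → x₃ v = a₀ := by
    intro v hv
    obtain ⟨e, he⟩ := hwin v.1
    rw [show v = (v.1, v.2) from rfl, he v.1 (by omega) (by omega)]
    exact hvert _ (by simp only; omega)
  have hMr : 0 ≤ M * r := by positivity
  -- tails
  have hp₁P : p₁ ∣ P := by rw [hPdef]; exact Nat.dvd_factorial hp₁ hp₁'
  have hp₂P : p₂ ∣ P := by rw [hPdef]; exact Nat.dvd_factorial hp₂ hp₂'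
  have hP1' : (1 : ℤ) ≤ P := by exact_mod_cast hP1
  have hright : ∀ v : ℤ × ℤ, |t₁| + M * r ≤ v.1 → f^[M] x₃ v = a₀ := by
    intro v hv
    have ha := abs_nonneg t₁
    have ha' := le_abs_self t₁
    refine h.tail hM hx₃X hx₃v (Set.Ici |t₁|) ?_ ?_ v ?_
    · intro c
      refine ⟨|t₁| + |c| + r, fun i h1 h2 => ?_⟩
      have := neg_abs_le c
      have := abs_nonneg c
      have : |t₁| + |c| + r ≤ (|t₁| + |c| + r) * P := le_mul_of_one_le_right (by omega) hP1'
      simp only [Set.mem_Ici]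
      omega
    · intro i hi k hik j
      simp only [Set.mem_Ici] at hi hik
      rw [hx₃]
      simp only
      rw [hg₂a _ (by omega), hg₂a _ (by omega), neg_neg, neg_neg,
        ray_int ht₁ hp₁P k i (by omega) (by omega)]
    · intro i h1 h2
      simp only [Set.mem_Ici]
      omega
  have hleft : ∀ v : ℤ × ℤ, v.1 ≤ -(|t₂| + M * r) → f^[M] x₃ v = a₀ := by
    intro v hv
    have ha := abs_nonneg t₂
    have ha' := le_abs_self t₂
    refine h.tail hM hx₃X hx₃v (Set.Iic (-|t₂|)) ?_ ?_ v ?_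
    · intro c
      refine ⟨-(|t₂| + |c| + r), fun i h1 h2 => ?_⟩
      have := le_abs_self c
      have := abs_nonneg c
      have : |t₂| + |c| + r ≤ (|t₂| + |c| + r) * P := le_mul_of_one_le_right (by omega) hP1'
      simp only [Set.mem_Iic]
      rw [neg_mul]
      omega
    · intro i hi k hik j
      simp only [Set.mem_Iic] at hi hik
      rw [hx₃]
      simp only
      have e : -(i + k * P) = -i + (-k) * P := by ring
      rw [e, ray_int ht₂ hp₂P (-k) (-i) (by omega) (by rw [← e]; omega)]
    · intro i h1 h2
      simp only [Set.mem_Iic]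
      omega
  have hF : f^[M] x₃ ∈ F a₀ X := by
    refine ⟨h.iter_mem M _ hx₃X, |t₁| + |t₂| + (L + R + M * r), fun v hv => ?_⟩
    have := abs_nonneg t₁
    have := abs_nonneg t₂
    unfold near at hv
    simp only [Prod.fst_zero, Prod.snd_zero] at hv
    by_cases h1 : |t₁| + M * r ≤ v.1
    · exact hright v h1
    by_cases h2 : v.1 ≤ -(|t₂| + M * r)
    · exact hleft v h2
    · exact h.vb_iter hx₃X hx₃v M v (by omega)
  have hfin := hT _ hF
  rw [← Function.iterate_add_apply] at hfin
  rw [h.iter_local (T + M) y hy x₃ hx₃X 0, hfin]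
  intro u hu
  rw [hx₃in u]
  rw [hL]
  exact hu

theorem mk_sys (D : Finset (ℤ × ℤ)) (Fbd : Set (↥D → A))
    (hSFT : X = {x : (ℤ × ℤ) → A | ∀ v : ℤ × ℤ, (fun d : ↥D => x (v + ↑d)) ∉ Fbd})
    (h0 : (fun _ => a₀) ∈ X)
    (hmaps : Set.MapsTo f X X)
    (hfc : ContinuousOn f X)
    (hfeq : ∀ (v : ℤ × ℤ), ∀ x ∈ X, f (fun u => x (u - v)) = fun u => f x (u - v))
    (hAN : ∀ x ∈ X,
      Filter.Tendsto (fun n => f^[n] x) Filter.atTop (nhds fun _ => a₀)) :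
    ∃ r, Sys a₀ X f r := by
  have hmem : ∀ x, x ∈ X ↔ ∀ v : ℤ × ℤ, (fun d : ↥D => x (v + ↑d)) ∉ Fbd := by
    intro x; rw [hSFT]; rfl
  obtain ⟨s, hs⟩ : ∃ s : ℤ, s = ∑ d ∈ D, (|d.1| + |d.2|) := ⟨_, rfl⟩
  have hDs : ∀ d ∈ D, ∀ v, near s (v + d) v := by
    intro d hd v
    have hle : |d.1| + |d.2| ≤ ∑ i ∈ D, (|i.1| + |i.2|) :=
      Finset.single_le_sum (f := fun i : ℤ × ℤ => |i.1| + |i.2|)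
        (fun i _ => add_nonneg (abs_nonneg _) (abs_nonneg _)) hd
    have := abs_nonneg d.1
    have := abs_nonneg d.2
    have := le_abs_self d.1
    have := le_abs_self d.2
    have := neg_abs_le d.1
    have := neg_abs_le d.2
    unfold near
    simp only [Prod.fst_add, Prod.snd_add]
    omega
  have hloc : ∀ x : ℤ × ℤ → A, (∀ v, ∃ y ∈ X, ∀ u, near s u v → x u = y u) → x ∈ X := by
    intro x hx
    rw [hmem]
    intro v
    obtain ⟨y, hy, hxy⟩ := hx v
    have : (fun d : ↥D => x (v + ↑d)) = fun d : ↥D => y (v + ↑d) := by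
      funext d
      exact hxy _ (hDs d.1 d.2 v)
    rw [this]
    exact (hmem y).1 hy v
  have hsmem : ∀ x ∈ X, ∀ w : ℤ × ℤ, (fun u => x (u + w)) ∈ X := by
    intro x hx w
    rw [hmem]
    intro v
    have := (hmem x).1 hx (v + w)
    convert this using 4
    abel
  have hequi : ∀ w : ℤ × ℤ, ∀ x ∈ X, f (fun u => x (u + w)) = fun u => f x (u + w) := by
    intro w x hx
    have := hfeq (-w) x hx
    simpa only [sub_neg_eq_add] using this
  have hclosed : IsClosed X := by
    rw [← closure_subset_iff_isClosed]
    intro x hx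
    apply hloc
    intro v
    obtain ⟨y, hy, hyX⟩ := mem_closure_iff.1 hx _ (agree_open x s v) (fun _ _ => rfl)
    exact ⟨y, hyX, fun u hu => (hy u hu).symm⟩
  have han : ∀ x ∈ X, ∀ v, ∀ᶠ n in Filter.atTop, f^[n] x v = a₀ := by
    intro x hx v
    have h1 := (tendsto_pi_nhds.1 (hAN x hx)) v
    exact h1.eventually ((isOpen_discrete {a₀}).mem_nhds rfl)
  -- radius of the cellular automaton
  have hrad : ∃ l : ℤ, ∀ x ∈ X, ∀ y ∈ X, (∀ u, near l u 0 → x u = y u) → f x 0 = f y 0 := by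
    have h1 : ∀ x ∈ X, ∃ l : ℤ, ∀ y ∈ X, (∀ u, near l u 0 → y u = x u) → f y 0 = f x 0 := by
      intro x hx
      have hc : ContinuousOn (fun x => f x 0) X := (continuous_apply (0 : ℤ × ℤ)).comp_continuousOn hfc
      have hn := (hc x hx) ((isOpen_discrete {f x 0}).mem_nhds rfl)
      obtain ⟨O, hO, hxO, hsub⟩ := mem_nhdsWithin.1 (Filter.mem_map.1 hn)
      obtain ⟨l, hl⟩ := exists_agree_subset x O hO hxO
      exact ⟨l, fun y hy hyx => hsub ⟨hl y hyx, hy⟩⟩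
    choose! l hl using h1
    obtain ⟨t, htX, ht⟩ := hclosed.isCompact.elim_nhds_subcover
      (fun x => {y : ℤ × ℤ → A | ∀ u, near (l x) u 0 → y u = x u})
      (fun x _ => (agree_open x (l x) 0).mem_nhds (fun _ _ => rfl))
    refine ⟨∑ x ∈ t, |l x|, fun x hx y hy hxy => ?_⟩
    obtain ⟨z, hz, hxz⟩ := Set.mem_iUnion₂.1 (ht hx)
    rw [hl z (htX z hz) x hx hxz]
    symm
    apply hl z (htX z hz) y hy
    intro u hu
    rw [← hxz u hu]
    symm
    apply hxy
    have hle : |l z| ≤ ∑ x ∈ t, |l x| :=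
      Finset.single_le_sum (f := fun x => |l x|) (fun i _ => abs_nonneg _) hz
    have := le_abs_self (l z)
    unfold near at *
    omega
  obtain ⟨l, hl⟩ := hrad
  have hfz : f (fun _ => a₀) = fun _ => a₀ := by
    have hconst : ∀ n : ℕ, ∀ v, f^[n] (fun _ => a₀) v = f^[n] (fun _ => a₀) 0 ∧
        f^[n] (fun _ => a₀) ∈ X := by
      intro n
      induction n with
      | zero => intro v; exact ⟨rfl, h0⟩
      | succ n ih =>
        intro v
        have hX := (ih 0).2
        rw [Function.iterate_succ_apply']
        refine ⟨?_, hmaps hX⟩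
        have h1 := congrFun (hequi v _ hX) 0
        have h2 : (fun u => f^[n] (fun _ => a₀) (u + v)) = f^[n] (fun _ => a₀) := by
          funext u
          rw [(ih (u + v)).1, (ih u).1]
        rw [h2] at h1
        simpa using h1.symm
    have h1 := han _ h0 0
    obtain ⟨n, hn⟩ := Filter.eventually_atTop.1 h1
    have e1 : f^[n] (fun _ => a₀) = fun _ => a₀ := by
      funext v; rw [(hconst n v).1]; exact hn n le_rfl
    have e2 : f^[n + 1] (fun _ => a₀) = fun _ => a₀ := by
      funext v; rw [(hconst (n + 1) v).1]; exact hn (n + 1) (Nat.le_succ n)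
    rw [Function.iterate_succ_apply', e1] at e2
    exact e2
  refine ⟨max (max s l) 1, le_max_right _ _, h0, hfz, ?_, fun x hx => hmaps hx, ?_, hsmem, hequi,
    han⟩
  · intro x hx
    apply hloc
    intro v
    obtain ⟨y, hy, hxy⟩ := hx v
    refine ⟨y, hy, fun u hu => hxy u ?_⟩
    unfold near at *
    omega
  · intro x hx y hy v hxy
    have h1 := hl _ (hsmem x hx v) _ (hsmem y hy v) (by
      intro u hu
      apply hxy
      unfold near at *
      simp only [Prod.fst_zero, Prod.snd_zero, Prod.fst_add, Prod.snd_add] at *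
      omega)
    rw [hequi v x hx, hequi v y hy] at h1
    simpa using h1

end
end NilRig

/-- a block-gluing `ℤ²`-subshift of finite type containing the all-`a₀`
configuration is nil-rigid: every continuous shift-commuting self-map `f` of `X` with
`fⁿ(x) → a₀^{ℤ²}` for all `x ∈ X` satisfies `fⁿ(X) = {a₀^{ℤ²}}` for some `n`. -/
theorem statement15 {A : Type} [Finite A] [TopologicalSpace A] [DiscreteTopology A]
    (a₀ : A)
    (X : Set ((ℤ × ℤ) → A))
    -- `X` is a subshift of finite type, defined by forbidden patterns `Fbd` on the
    -- finite shape `D`: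
    (D : Finset (ℤ × ℤ)) (Fbd : Set (↥D → A))
    (hSFT : X = {x : (ℤ × ℤ) → A | ∀ v : ℤ × ℤ, (fun d : ↥D => x (v + ↑d)) ∉ Fbd})
    (h0 : (fun _ => a₀) ∈ X)
    -- `X` is block-gluing with gluing constant `R`: patterns of points of `X` on
    -- rectangles (products of order-connected subsets of `ℤ`) at `ℓ∞`-distance at
    -- least `R` can be combined into a single point of `X`:
    (R : ℕ)
    (hglue : ∀ S T : Set (ℤ × ℤ),
      (∃ I J : Set ℤ, I.OrdConnected ∧ J.OrdConnected ∧ S = I ×ˢ J) →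
      (∃ I J : Set ℤ, I.OrdConnected ∧ J.OrdConnected ∧ T = I ×ˢ J) →
      (∀ a ∈ S, ∀ b ∈ T, (R : ℤ) ≤ max |a.1 - b.1| |a.2 - b.2|) →
      ∀ p ∈ X, ∀ q ∈ X, ∃ x ∈ X, (∀ v ∈ S, x v = p v) ∧ (∀ v ∈ T, x v = q v))
    -- `f` is a continuous self-map of `X` commuting with the shift action
    -- `(v·x)(u) = x(u - v)`:
    (f : ((ℤ × ℤ) → A) → ((ℤ × ℤ) → A))
    (hmaps : Set.MapsTo f X X)
    (hfc : ContinuousOn f X)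
    (hfeq : ∀ (v : ℤ × ℤ), ∀ x ∈ X, f (fun u => x (u - v)) = fun u => f x (u - v))
    (hAN : ∀ x ∈ X,
      Filter.Tendsto (fun n => f^[n] x) Filter.atTop (nhds fun _ => a₀)) :
    ∃ n : ℕ, ∀ x ∈ X, f^[n] x = fun _ => a₀ := by
  obtain ⟨r, h⟩ := NilRig.mk_sys D Fbd hSFT h0 hmaps hfc hfeq hAN
  exact h.main R hglue
end

section
/- Say a group G is nil-rigid if for every expansive 0-gluing pointed dynamical system (G, X, 0) in which the homoclinic points are dense, every asymptotically nilpotent endomorphism of (G, X, 0) is nilpotent. If every finitely generated subgroup of a group G is nil-rigid, then G is nil-rigid. -/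
/-- A point `x` is homoclinic: `g • x` is eventually close to `x₀` outside finite
subsets of `G`. -/
def Homoclinic (G : Type) [Group G] {X : Type} [MetricSpace X] [MulAction G X]
    (x₀ x : X) : Prop :=
  ∀ ε : ℝ, 0 < ε → ∃ E : Finset G, ∀ g : G, g ∉ E → dist (g • x) x₀ < ε

/-- The `0`-gluing property of a pointed dynamical system. -/
def ZeroGluing (G : Type) [Group G] {X : Type} [MetricSpace X] [MulAction G X]
    (x₀ : X) : Prop :=
  ∀ ε : ℝ, 0 < ε → ∃ δ : ℝ, 0 < δ ∧ ∃ E : Finset G,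
    ∀ (I : Type) (A : I → Set G) (p : I → X),
      (∀ g : G, ∃! i : I, g ∈ A i) →
      (∀ i : I, ∀ g ∈ A i, (∃ e ∈ E, e * g ∉ A i) → dist (g • p i) x₀ < δ) →
      ∃ y : X, ∀ i : I, ∀ g ∈ A i, dist (g • y) (g • p i) < ε

/-- A group `G` is nil-rigid if for every expansive `0`-gluing pointed dynamical
system `(G, X, 0)` with dense homoclinic points, every asymptotically nilpotent
endomorphism is nilpotent. -/
def NilRigid (G : Type) [Group G] : Prop :=
  ∀ (X : Type) (_ : MetricSpace X) (_ : CompactSpace X) (_ : MulAction G X),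
    (∀ g : G, Continuous fun x : X => g • x) →
    ∀ x₀ : X, (∀ g : G, g • x₀ = x₀) →
    (∃ Δ : ℝ, 0 < Δ ∧ ∀ x y : X, (∀ g : G, dist (g • x) (g • y) ≤ Δ) → x = y) →
    ZeroGluing G x₀ →
    Dense {x : X | Homoclinic G x₀ x} →
    ∀ f : X → X, Continuous f → f x₀ = x₀ →
    (∀ (g : G) (x : X), f (g • x) = g • f x) →
    (∀ x : X, Filter.Tendsto (fun n => f^[n] x) Filter.atTop (nhds x₀)) →
    ∃ n : ℕ, ∀ x : X, f^[n] x = x₀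

/-- Uniform expansivity on a compact space. -/
theorem uniform_expansive {K : Type} [Group K] {Y : Type} [MetricSpace Y] [CompactSpace Y]
    [MulAction K Y] (hc : ∀ g : K, Continuous fun x : Y => g • x) (Δ : ℝ)
    (hΔ : ∀ x y : Y, (∀ g : K, dist (g • x) (g • y) ≤ Δ) → x = y) (η : ℝ) (hη : 0 < η) :
    ∃ F : Finset K, ∀ x y : Y, (∀ g ∈ F, dist (g • x) (g • y) ≤ Δ) → dist x y < η := by
  have hs : IsCompact {q : Y × Y | η ≤ dist q.1 q.2} :=
    (isClosed_le continuous_const continuous_dist).isCompact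
  obtain ⟨F, hF⟩ := hs.elim_finite_subfamily_closed
    (fun g : K => {q : Y × Y | dist (g • q.1) (g • q.2) ≤ Δ})
    (fun g => isClosed_le (((hc g).comp continuous_fst).dist ((hc g).comp continuous_snd))
      continuous_const) (by
      ext q
      simp only [Set.mem_inter_iff, Set.mem_iInter, Set.mem_setOf_eq, Set.mem_empty_iff_false,
        iff_false, not_and]
      intro h1 h2
      have h3 := hΔ _ _ h2
      rw [h3, dist_self] at h1
      linarith)
  refine ⟨F, fun x y hxy => ?_⟩
  by_contra hcon
  have : (x, y) ∈ ({q : Y × Y | η ≤ dist q.1 q.2} ∩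
      ⋂ g ∈ F, {q : Y × Y | dist (g • q.1) (g • q.2) ≤ Δ}) := by
    simp only [Set.mem_inter_iff, Set.mem_iInter, Set.mem_setOf_eq]
    exact ⟨not_lt.mp hcon, hxy⟩
  rw [hF] at this
  exact this

/-- The points that are close to `x₀` outside of `H`. -/
def trunc {G : Type} [Group G] {X : Type} [MetricSpace X] [MulAction G X]
    (H : Subgroup G) (x₀ : X) (r : ℝ) : Set X :=
  {x | ∀ g : G, g ∉ H → dist (g • x) x₀ ≤ r}

/-- The action of `H` on the truncated space. -/
def truncAction {G : Type} [Group G] {X : Type} [MetricSpace X] [MulAction G X]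
    (H : Subgroup G) (x₀ : X) (r : ℝ) : MulAction H (trunc H x₀ r) where
  smul h x := ⟨(h : G) • x.1, fun g hg => by
    rw [← mul_smul]
    exact x.2 _ (fun hh => hg ((Subgroup.mul_mem_cancel_right H h.2).1 hh))⟩
  one_smul x := Subtype.ext (one_smul G x.1)
  mul_smul a b x := Subtype.ext (mul_smul (a : G) (b : G) x.1)

/-- if every finitely generated subgroup of `G` is nil-rigid, then so
is `G`. -/
theorem statement18 {G : Type} [Group G]
    (h : ∀ H : Subgroup G, H.FG → NilRigid H) :
    NilRigid G := by
  classical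
  intro X _ _ _ hc x₀ hx₀ hexp hglue hdense f hf hf0 hfe hnil
  obtain ⟨Δ, hΔ, hexp⟩ := hexp
  obtain ⟨δ₀, hδ₀, E₀, hE₀⟩ := hglue (Δ / 4) (by linarith)
  obtain ⟨ε, hε, hfε⟩ := Metric.uniformContinuous_iff.1
    (CompactSpace.uniformContinuous_of_continuous hf) (Δ / 2) (by linarith)
  obtain ⟨F, hF⟩ := uniform_expansive hc Δ hexp ε hε
  obtain ⟨H, hHdef⟩ : ∃ H : Subgroup G, H = Subgroup.closure ((E₀ ∪ F : Finset G) : Set G) :=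
    ⟨_, rfl⟩
  have hHfg : H.FG := ⟨E₀ ∪ F, hHdef.symm⟩
  have hE₀H : ∀ e ∈ E₀, e ∈ H := fun e he => by
    rw [hHdef]; exact Subgroup.subset_closure (by simp [he])
  have hFH : ∀ e ∈ F, e ∈ H := fun e he => by
    rw [hHdef]; exact Subgroup.subset_closure (by simp [he])
  clear hHdef
  have key : ∀ (I : Type) (A : I → Set H) (p : I → X),
      (∀ g : H, ∃! i : I, g ∈ A i) →
      (∀ i : I, ∀ g ∈ A i, (∃ e : H, (e : G) ∈ E₀ ∧ e * g ∉ A i) →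
        dist ((g : G) • p i) x₀ < δ₀) →
      ∃ y ∈ trunc H x₀ (Δ / 2), ∀ i : I, ∀ g ∈ A i,
        dist ((g : G) • y) ((g : G) • p i) < Δ / 4 := by
    intro I A p hpart hbd
    obtain ⟨y, hy⟩ := hE₀ (Option I)
      (fun o => o.elim ((H : Set G)ᶜ) (fun i => Set.image Subtype.val (A i)))
      (fun o => o.elim x₀ p) (by
        intro g
        by_cases hg : g ∈ H
        · obtain ⟨i, hi, hu⟩ := hpart ⟨g, hg⟩
          refine ⟨some i, ⟨⟨g, hg⟩, hi, rfl⟩, ?_⟩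
          rintro (_ | j) hj
          · exact absurd hg hj
          · obtain ⟨g', hg', rfl⟩ := hj
            exact congrArg some (hu j hg')
        · refine ⟨none, hg, ?_⟩
          rintro (_ | j) hj
          · rfl
          · obtain ⟨g', hg', rfl⟩ := hj
            exact absurd g'.2 hg) (by
        rintro (_ | i) g hg ⟨e, he, heg⟩
        · exact absurd (fun hh => hg ((Subgroup.mul_mem_cancel_left H (hE₀H e he)).1 hh)) heg
        · obtain ⟨g', hg', rfl⟩ := hg
          refine hbd i g' hg' ⟨⟨e, hE₀H e he⟩, he, fun hh => heg ?_⟩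
          exact ⟨_, hh, rfl⟩)
    refine ⟨y, fun g hg => ?_, fun i g hg => hy (some i) g ⟨g, hg, rfl⟩⟩
    have h1 := hy none g hg
    simp only [Option.elim, hx₀] at h1
    linarith
  have cut : ∀ x : X, ∃ y ∈ trunc H x₀ (Δ / 2), ∀ g : H,
      dist ((g : G) • y) ((g : G) • x) < Δ / 4 := by
    intro x
    obtain ⟨y, hy, hy2⟩ := key Unit (fun _ => Set.univ) (fun _ => x)
      (fun g => ⟨(), trivial, fun _ _ => rfl⟩)
      (fun i g _ hh => by obtain ⟨e, _, he⟩ := hh; exact absurd trivial he)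
    exact ⟨y, hy, fun g => hy2 () g trivial⟩
  -- the truncated system
  letI act : MulAction H (trunc H x₀ (Δ / 2)) := truncAction H x₀ (Δ / 2)
  have hval : ∀ (g : H) (x : trunc H x₀ (Δ / 2)), ((g • x : trunc H x₀ (Δ / 2)) : X)
      = (g : G) • (x : X) := fun _ _ => rfl
  have hYcl : IsClosed (trunc H x₀ (Δ / 2)) := by
    have : trunc H x₀ (Δ / 2) = ⋂ g : G, ⋂ _ : g ∉ H, {x : X | dist (g • x) x₀ ≤ Δ / 2} := by
      ext x; simp [trunc]
    rw [this]
    exact isClosed_iInter fun g => isClosed_iInter fun _ =>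
      isClosed_le ((hc g).dist continuous_const) continuous_const
  haveI hYc : CompactSpace (trunc H x₀ (Δ / 2)) := isCompact_iff_compactSpace.1 hYcl.isCompact
  have hcY : ∀ g : H, Continuous fun x : trunc H x₀ (Δ / 2) => g • x := fun g =>
    Continuous.subtype_mk ((hc g).comp continuous_subtype_val) _
  have h0 : x₀ ∈ trunc H x₀ (Δ / 2) := fun g _ => by rw [hx₀, dist_self]; linarith
  have hexpY : ∀ x y : trunc H x₀ (Δ / 2), (∀ g : H, dist (g • x) (g • y) ≤ Δ) → x = y := by
    intro x y hxy
    refine Subtype.ext (hexp _ _ fun g => ?_)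
    by_cases hg : g ∈ H
    · exact hxy ⟨g, hg⟩
    · have h1 := x.2 g hg
      have h2 := y.2 g hg
      have h3 := dist_triangle_right (g • x.1) (g • y.1) x₀
      linarith
  have hfY : ∀ x ∈ trunc H x₀ (Δ / 2), f x ∈ trunc H x₀ (Δ / 2) := by
    intro x hx g hg
    have h1 : dist (g • x) x₀ < ε := by
      refine hF _ _ fun e he => ?_
      rw [hx₀, ← mul_smul]
      have := hx (e * g) (fun hh => hg ((Subgroup.mul_mem_cancel_left H (hFH e he)).1 hh))
      linarith
    have h2 := hfε h1
    rw [hf0, hfe] at h2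
    exact h2.le
  have hiter : ∀ (n : ℕ) (x : trunc H x₀ (Δ / 2)),
      (((fun x : trunc H x₀ (Δ / 2) => (⟨f x.1, hfY _ x.2⟩ : trunc H x₀ (Δ / 2)))^[n] x :
        trunc H x₀ (Δ / 2)) : X) = f^[n] x.1 := by
    intro n
    induction n with
    | zero => intro x; rfl
    | succ k ih => intro x; rw [Function.iterate_succ_apply, Function.iterate_succ_apply, ih]
  obtain ⟨n, hn⟩ := h H hHfg (trunc H x₀ (Δ / 2)) inferInstance hYc act hcY ⟨x₀, h0⟩
    (fun g => Subtype.ext (hx₀ g)) ⟨Δ, hΔ, hexpY⟩ (by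
      -- gluing
      intro ε' hε'
      obtain ⟨F', hF'⟩ := uniform_expansive hcY Δ hexpY ε' hε'
      have hev : ∀ᶠ a in nhds x₀, ∀ e ∈ F', dist ((e : G) • a) x₀ < Δ / 4 := by
        rw [Filter.eventually_all_finset]
        intro e _
        have h1 : Filter.Tendsto (fun a : X => (e : G) • a) (nhds x₀) (nhds x₀) := by
          have := (hc e).tendsto x₀
          rwa [hx₀] at this
        exact h1.eventually (Metric.ball_mem_nhds x₀ (by linarith))
      obtain ⟨δ₁, hδ₁, hδ₁e⟩ := Metric.eventually_nhds_iff.1 hev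
      refine ⟨min δ₀ (min δ₁ (Δ / 4)), by positivity,
        (E₀.preimage Subtype.val Subtype.val_injective.injOn) ∪ F' ∪ F'.image (·⁻¹), ?_⟩
      intro I A p hpart hbd
      have hbd1 : ∀ i : I, ∀ g ∈ A i, ∀ e : H, (e : G) ∈ E₀ ∨ e ∈ F' ∨ e⁻¹ ∈ F' → e * g ∉ A i →
          dist ((g : G) • (p i).1) x₀ < min δ₀ (min δ₁ (Δ / 4)) := by
        intro i g hg e he heg
        refine hbd i g hg ⟨e, ?_, heg⟩
        simp only [Finset.mem_union, Finset.mem_preimage, Finset.mem_image]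
        rcases he with he | he | he
        · exact Or.inl (Or.inl he)
        · exact Or.inl (Or.inr he)
        · exact Or.inr ⟨_, he, inv_inv e⟩
      obtain ⟨y, hyY, hy⟩ := key I A (fun i => (p i).1) hpart (by
        rintro i g hg ⟨e, he, heg⟩
        exact lt_of_lt_of_le (hbd1 i g hg e (Or.inl he) heg) (min_le_left _ _))
      refine ⟨⟨y, hyY⟩, fun i g hg => hF' _ _ fun e he => ?_⟩
      change dist ((e : G) • (g : G) • y) ((e : G) • (g : G) • (p i).1) ≤ Δ
      obtain ⟨j, hj, -⟩ := hpart (e * g)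
      have h1 : dist ((e : G) • (g : G) • y) ((e : G) • (g : G) • (p j).1) < Δ / 4 := by
        have := hy j (e * g) hj
        simpa only [Subgroup.coe_mul, mul_smul] using this
      by_cases hij : e * g ∈ A i
      · have : j = i := (hpart (e * g)).unique hj hij
        subst this
        linarith
      · have h2 := hbd1 i g hg e (Or.inr (Or.inl he)) hij
        have h3 := hδ₁e (lt_of_lt_of_le h2 ((min_le_right _ _).trans (min_le_left _ _))) e he
        have h4 := hbd1 j (e * g) hj e⁻¹ (Or.inr (Or.inr (by simpa using he))) (by
          rw [inv_mul_cancel_left]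
          intro hgj
          have : j = i := (hpart g).unique hgj hg
          subst this
          exact hij hj)
        have h5 := lt_of_lt_of_le h4 ((min_le_right _ _).trans (min_le_right _ _))
        simp only [Subgroup.coe_mul, mul_smul] at h5
        have h6 := dist_triangle4 ((e : G) • (g : G) • y) ((e : G) • (g : G) • (p j).1) x₀
          ((e : G) • (g : G) • (p i).1)
        rw [dist_comm x₀] at h6
        linarith) (by
      -- density
      rw [Metric.dense_iff]
      intro x η hη
      obtain ⟨F', hF'⟩ := uniform_expansive hcY Δ hexpY η hη
      have hev : ∀ᶠ a in nhds x.1, ∀ e ∈ F', dist ((e : G) • a) ((e : G) • x.1) < Δ / 2 := by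
        rw [Filter.eventually_all_finset]
        intro e _
        exact ((hc e).tendsto x.1).eventually (Metric.ball_mem_nhds _ (by linarith))
      obtain ⟨z, hzx, hz⟩ := mem_closure_iff_nhds.1 (hdense x.1) _ hev
      obtain ⟨y, hyY, hyz⟩ := cut z
      refine ⟨⟨y, hyY⟩, ?_, ?_⟩
      · refine hF' _ _ fun e he => ?_
        change dist ((e : G) • y) ((e : G) • x.1) ≤ Δ
        have h1 := hyz e
        have h2 : dist ((e : G) • z) ((e : G) • x.1) < Δ / 2 := hzx e he
        have h3 := dist_triangle ((e : G) • y) ((e : G) • z) ((e : G) • x.1)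
        linarith
      · intro ξ hξ
        obtain ⟨F2, hF2⟩ := uniform_expansive hcY Δ hexpY ξ hξ
        obtain ⟨S, hS⟩ := hz (Δ / 2) (by linarith)
        refine ⟨F2.biUnion fun e => (S.preimage Subtype.val Subtype.val_injective.injOn).image
          fun s : H => e⁻¹ * s, fun g hg => hF2 _ _ fun e he => ?_⟩
        have hegS : ((e * g : H) : G) ∉ S := by
          intro hh
          apply hg
          simp only [Finset.mem_biUnion, Finset.mem_image, Finset.mem_preimage]
          exact ⟨e, he, e * g, hh, by rw [inv_mul_cancel_left]⟩
        have h1 := hS _ hegS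
        have h2 := hyz (e * g)
        have h3 := dist_triangle (((e * g : H) : G) • y) (((e * g : H) : G) • z) x₀
        change dist ((e : G) • (g : G) • y) ((e : G) • x₀) ≤ Δ
        rw [hx₀, ← mul_smul, ← Subgroup.coe_mul]
        linarith) (fun x => ⟨f x.1, hfY _ x.2⟩)
    (Continuous.subtype_mk (hf.comp continuous_subtype_val) _) (Subtype.ext hf0)
    (fun g x => Subtype.ext (hfe g x.1)) (by
      intro x
      rw [tendsto_subtype_rng]
      simp only [hiter]
      exact hnil x.1)
  have hn' : ∀ y ∈ trunc H x₀ (Δ / 2), f^[n] y = x₀ := by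
    intro y hy
    have := congrArg Subtype.val (hn ⟨y, hy⟩)
    rwa [hiter] at this
  have hfin : ∀ x, dist (f^[n] x) x₀ ≤ Δ := by
    intro x
    obtain ⟨y, hy, hyx⟩ := cut x
    have hk : ∀ k : ℕ, ∀ g : H, dist ((g : G) • f^[k] y) ((g : G) • f^[k] x) ≤ Δ := by
      intro k
      induction k with
      | zero => intro g; have := hyx g; simp only [Function.iterate_zero, id]; linarith
      | succ k ih =>
        intro g
        rw [Function.iterate_succ_apply', Function.iterate_succ_apply', ← hfe, ← hfe]
        have h1 : dist ((g : G) • f^[k] y) ((g : G) • f^[k] x) < ε := by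
          refine hF _ _ fun e he => ?_
          have := ih (⟨e, hFH e he⟩ * g)
          simpa only [Subgroup.coe_mul, mul_smul] using this
        have := hfε h1
        linarith
    have h1 := hk n 1
    rw [hn' y hy, Subgroup.coe_one, one_smul, one_smul, dist_comm] at h1
    exact h1
  have hcomm : ∀ (k : ℕ) (g : G) (x : X), f^[k] (g • x) = g • f^[k] x := by
    intro k g
    induction k with
    | zero => intro x; rfl
    | succ k ih => intro x; rw [Function.iterate_succ_apply, hfe, ih, Function.iterate_succ_apply]
  refine ⟨n, fun x => hexp _ _ fun g => ?_⟩
  rw [hx₀, ← hcomm]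
  exact hfin _
end
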